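/- arXiv:1603.07061 — 2 statements merged into one kernel-verified Lean document; each statement's English description precedes it below -/
import Mathlib

section
/- A priori C¹ bound for the Euler–Weil–Petersson equation: there exists an absolute constant C > 0 such that, for every T ∈ (0,∞] and every smooth u : [0,T) × S¹ → ℝ whose Fourier coefficients in θ at the modes n = 0, 1, −1 vanish for each t, and such that ω := −H(∂³_θ u + ∂_θ u) satisfies ∂_t ω + u ∂_θ ω + 2 (∂_θ u) ω = 0 pointwise on [0,T) × S¹, one has for all t ∈ [0,T): sup_θ |∂_θ u(t,θ)| ≤ sup_θ |∂_θ u(0,θ)| + C·E₀·t, where E₀ = ∫_{S¹} H(u(0,·))(θ) · (∂³_θ u(0,θ) + ∂_θ u(0,θ)) dθ. -/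
open MeasureTheory Real

/-- The `n`-th Fourier coefficient of a `2π`-periodic function `f : ℝ → ℝ`. -/
noncomputable def fourierC (f : ℝ → ℝ) (n : ℤ) : ℂ :=
  (1 / (2 * π)) * ∫ θ in (0:ℝ)..(2 * π), (f θ : ℂ) * Complex.exp (-Complex.I * (n : ℂ) * (θ : ℂ))

/-- The Hilbert transform on the circle, sending `Σ cₙ e^{inθ}` to `Σ (−i sgn n) cₙ e^{inθ}`. -/
noncomputable def hilbertT (f : ℝ → ℝ) (θ : ℝ) : ℝ :=
  (∑' n : ℤ, -Complex.I * ((n.sign : ℤ) : ℂ) * fourierC f n *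
    Complex.exp (Complex.I * (n : ℂ) * (θ : ℂ))).re

/-!
The spatial maximum of `u_θ` is attained where `u_θθ = 0`, so it grows at most at the rate
`sup |u_θt + u u_θθ|`. Inverting the inertia operator in the equation turns this material
derivative into a bilinear Fourier form in `u`. Each of its two terms loses too many derivatives,
but in the symmetrised symbol the leading terms cancel and what is left is at most
`8 j² k² / (j² + k²)`. By `2xy ≤ x² + y²` and `Σ_k 1 / (j² + k²) ≤ 8 / |j|`, the sum of the
absolute values of its Fourier coefficients is at most a multiple of `Σ |j|³ |û_j|²`, that is, of
the energy, which is conserved because the nonlinearity is orthogonal to `u`.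
-/

namespace EulerWeilPetersson

open Complex (I)
open scoped ComplexConjugate ContDiff ENNReal Topology

section FourierCoefficients

variable {f g : ℝ → ℝ} {n : ℤ}

lemma norm_exp_I_mul (n : ℤ) (θ : ℝ) : ‖Complex.exp (I * n * θ)‖ = 1 := by
  simp [Complex.norm_exp]

lemma norm_exp_neg_I_mul (n : ℤ) (θ : ℝ) : ‖Complex.exp (-I * n * θ)‖ = 1 := by
  simp [Complex.norm_exp]

lemma hasDerivAt_exp_mul (c : ℂ) (θ : ℝ) :
    HasDerivAt (fun x : ℝ => Complex.exp (c * x)) (c * Complex.exp (c * θ)) θ := by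
  simpa [mul_comm] using ((hasDerivAt_id (θ : ℂ)).const_mul c).cexp.comp_ofReal

lemma intervalIntegrable_mul_exp (hf : Continuous f) (n : ℤ) (a b : ℝ) :
    IntervalIntegrable (fun θ : ℝ => (f θ : ℂ) * Complex.exp (-I * n * θ)) volume a b :=
  Continuous.intervalIntegrable (by fun_prop) a b

lemma norm_fourierC_le {B : ℝ} (hB : ∀ θ ∈ Set.Icc 0 (2 * π), |f θ| ≤ B) (n : ℤ) :
    ‖fourierC f n‖ ≤ B := by
  have hint : ‖∫ θ in (0 : ℝ)..(2 * π), (f θ : ℂ) * Complex.exp (-I * n * θ)‖ ≤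
      B * |2 * π - 0| := by
    refine intervalIntegral.norm_integral_le_of_norm_le_const fun θ hθ => ?_
    rw [Set.uIoc_of_le two_pi_pos.le] at hθ
    rw [norm_mul, norm_exp_neg_I_mul, mul_one, Complex.norm_real]
    exact hB θ (Set.Ioc_subset_Icc_self hθ)
  rw [sub_zero, abs_of_pos two_pi_pos] at hint
  calc ‖fourierC f n‖
      = (2 * π)⁻¹ * ‖∫ θ in (0 : ℝ)..(2 * π), (f θ : ℂ) * Complex.exp (-I * n * θ)‖ := by
        simp [fourierC, abs_of_pos pi_pos]
    _ ≤ (2 * π)⁻¹ * (B * (2 * π)) := by gcongr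
    _ = B := by field_simp

lemma fourierC_neg_index (f : ℝ → ℝ) (n : ℤ) : fourierC f (-n) = conj (fourierC f n) := by
  simp only [fourierC, intervalIntegral.integral_of_le two_pi_pos.le, map_mul, ← integral_conj,
    ← Complex.exp_conj]
  simp [map_ofNat]

lemma fourierC_add (hf : Continuous f) (hg : Continuous g) (n : ℤ) :
    fourierC (fun θ => f θ + g θ) n = fourierC f n + fourierC g n := by
  simp only [fourierC, Complex.ofReal_add, add_mul]
  rw [intervalIntegral.integral_add (intervalIntegrable_mul_exp hf n _ _)
    (intervalIntegrable_mul_exp hg n _ _), mul_add]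

lemma fourierC_const_mul (c : ℝ) (f : ℝ → ℝ) (n : ℤ) :
    fourierC (fun θ => c * f θ) n = c * fourierC f n := by
  simp only [fourierC, Complex.ofReal_mul, mul_assoc, intervalIntegral.integral_const_mul]
  ring

lemma fourierC_neg (f : ℝ → ℝ) (n : ℤ) : fourierC (fun θ => -f θ) n = -fourierC f n := by
  simpa using fourierC_const_mul (-1) f n

/-- The function `f` is smooth and descends to the circle `ℝ / 2πℤ`. -/
structure SmoothPeriodic (f : ℝ → ℝ) : Prop where
  contDiff : ContDiff ℝ ∞ f
  periodic : Function.Periodic f (2 * π)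

namespace SmoothPeriodic

protected lemma continuous (hf : SmoothPeriodic f) : Continuous f :=
  hf.contDiff.continuous

protected lemma hasDerivAt (hf : SmoothPeriodic f) (θ : ℝ) : HasDerivAt f (deriv f θ) θ :=
  (hf.contDiff.differentiable (by simp) θ).hasDerivAt

protected lemma deriv (hf : SmoothPeriodic f) : SmoothPeriodic (deriv f) where
  contDiff := (contDiff_infty_iff_deriv.1 hf.contDiff).2
  periodic θ := by rw [← deriv_comp_add_const, funext hf.periodic]

protected lemma const (c : ℝ) : SmoothPeriodic fun _ => c :=
  ⟨contDiff_const, fun _ => rfl⟩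

protected lemma neg (hf : SmoothPeriodic f) : SmoothPeriodic fun θ => -f θ :=
  ⟨hf.contDiff.neg, fun θ => by simp only [hf.periodic θ]⟩

protected lemma add (hf : SmoothPeriodic f) (hg : SmoothPeriodic g) :
    SmoothPeriodic fun θ => f θ + g θ :=
  ⟨hf.contDiff.add hg.contDiff, fun θ => by simp only [hf.periodic θ, hg.periodic θ]⟩

protected lemma sub (hf : SmoothPeriodic f) (hg : SmoothPeriodic g) :
    SmoothPeriodic fun θ => f θ - g θ :=
  ⟨hf.contDiff.sub hg.contDiff, fun θ => by simp only [hf.periodic θ, hg.periodic θ]⟩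

protected lemma mul (hf : SmoothPeriodic f) (hg : SmoothPeriodic g) :
    SmoothPeriodic fun θ => f θ * g θ :=
  ⟨hf.contDiff.mul hg.contDiff, fun θ => by simp only [hf.periodic θ, hg.periodic θ]⟩

lemma exists_abs_le (hf : SmoothPeriodic f) : ∃ B, ∀ θ, |f θ| ≤ B := by
  obtain ⟨B, hB⟩ := (hf.periodic.isBounded_of_continuous two_pi_pos.ne'
    hf.continuous).exists_norm_le
  exact ⟨B, fun θ => hB _ (Set.mem_range_self θ)⟩

lemma integral_deriv_eq_zero (hf : SmoothPeriodic f) :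
    ∫ θ in (0 : ℝ)..(2 * π), deriv f θ = 0 := by
  rw [intervalIntegral.integral_deriv_eq_sub (fun θ _ => (hf.hasDerivAt θ).differentiableAt)
    (hf.deriv.continuous.intervalIntegrable _ _), hf.periodic.eq, sub_self]

lemma fourierC_deriv (hf : SmoothPeriodic f) (n : ℤ) :
    fourierC (deriv f) n = I * n * fourierC f n := by
  have hparts := intervalIntegral.integral_deriv_mul_eq_sub
    (u := fun θ : ℝ => (f θ : ℂ)) (a := 0) (b := 2 * π)
    (fun θ _ => (hf.hasDerivAt θ).ofReal_comp) (fun θ _ => hasDerivAt_exp_mul (-I * n) θ)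
    (by have := hf.deriv.continuous; exact Continuous.intervalIntegrable (by fun_prop) _ _)
    (by exact Continuous.intervalIntegrable (by fun_prop) _ _)
  have hexp : Complex.exp (-I * n * (2 * π : ℝ)) = 1 :=
    Complex.exp_eq_one_iff.2 ⟨-n, by push_cast; ring⟩
  have hfactor : ∀ θ : ℝ, (f θ : ℂ) * (-I * n * Complex.exp (-I * n * θ)) =
      -I * n * ((f θ : ℂ) * Complex.exp (-I * n * θ)) := fun θ => by ring
  simp only [hexp, hf.periodic.eq, hfactor, Complex.ofReal_zero, mul_zero, Complex.exp_zero,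
    sub_self] at hparts
  have hf' := hf.deriv.continuous
  rw [intervalIntegral.integral_add (intervalIntegrable_mul_exp hf' n _ _)
    (by have := hf.continuous; exact Continuous.intervalIntegrable (by fun_prop) _ _),
    intervalIntegral.integral_const_mul] at hparts
  unfold fourierC
  linear_combination (1 / (2 * π) : ℂ) * hparts

end SmoothPeriodic

lemma fourierC_one (n : ℤ) : fourierC (fun _ => 1) n = if n = 0 then 1 else 0 := by
  split_ifs with hn
  · have : (π : ℂ) ≠ 0 := mod_cast pi_ne_zero
    simp [fourierC, hn]
    field_simp
  · have hderiv := (SmoothPeriodic.const 1).fourierC_deriv n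
    have hzero : fourierC (deriv fun _ => 1) n = 0 := by simp [fourierC]
    simpa [hn] using hzero.symm.trans hderiv

lemma hasSum_fourierC (hf : Continuous f) (hper : Function.Periodic f (2 * π))
    (hsum : Summable (fourierC f)) (θ : ℝ) :
    HasSum (fun n : ℤ => fourierC f n * Complex.exp (I * n * θ)) (f θ : ℂ) := by
  have : Fact (0 < 2 * π) := ⟨two_pi_pos⟩
  have hπ : (π : ℂ) ≠ 0 := mod_cast pi_ne_zero
  have hper' : Function.Periodic (fun x => (f x : ℂ)) (2 * π) := fun x => by simp [hper x]
  let F : C(AddCircle (2 * π), ℂ) :=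
    ⟨hper'.lift, continuous_coinduced_dom.2 (Complex.continuous_ofReal.comp hf)⟩
  have hF : ∀ x : ℝ, F (x : AddCircle (2 * π)) = f x := hper'.lift_coe
  have hfourier : ∀ (m : ℤ) (x : ℝ), fourier m (x : AddCircle (2 * π)) =
      Complex.exp (I * m * x) := fun m x => by
    rw [fourier_coe_apply]
    congr 1
    push_cast
    field_simp
  have hcoeff : fourierCoeff F = fourierC f := by
    ext m
    rw [fourierCoeff_eq_intervalIntegral F m 0, zero_add, fourierC, Complex.real_smul]
    simp only [hF, hfourier, smul_eq_mul, mul_comm (Complex.exp _)]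
    push_cast
    simp
  simpa only [hF, hfourier, hcoeff, smul_eq_mul] using
    has_pointwise_sum_fourier_series_of_summable (f := F) (hcoeff ▸ hsum) (θ : AddCircle (2 * π))

lemma hasSum_fourierC_mul {a : ℤ → ℂ} (ha : Summable fun n => ‖a n‖)
    (hf : ∀ θ : ℝ, HasSum (fun n : ℤ => a n * Complex.exp (I * n * θ)) (f θ : ℂ))
    (hg : Continuous g) (n : ℤ) :
    HasSum (fun j => a j * fourierC g (n - j)) (fourierC (fun θ => f θ * g θ) n) := by
  obtain ⟨B, hB⟩ := (isCompact_uIcc (a := 0) (b := 2 * π)).exists_bound_of_continuousOn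
    hg.continuousOn
  have hexp : ∀ (j : ℤ) (θ : ℝ), Complex.exp (-I * ((n - j : ℤ) : ℂ) * θ) =
      Complex.exp (I * j * θ) * Complex.exp (-I * n * θ) := fun j θ => by
    rw [← Complex.exp_add]
    push_cast
    ring_nf
  have hswap := intervalIntegral.hasSum_integral_of_dominated_convergence (μ := volume)
    (a := 0) (b := 2 * π) (bound := fun j _ => ‖a j‖ * B)
    (F := fun j θ => a j * ((g θ : ℂ) * Complex.exp (-I * ((n - j : ℤ) : ℂ) * θ)))
    (f := fun θ => ((f θ * g θ : ℝ) : ℂ) * Complex.exp (-I * n * θ))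
    (fun j => Continuous.aestronglyMeasurable (by fun_prop))
    (fun j => .of_forall fun θ hθ => by
      rw [norm_mul, norm_mul, norm_exp_neg_I_mul, mul_one, Complex.norm_real]
      gcongr
      exact hB θ (Set.uIoc_subset_uIcc hθ))
    (.of_forall fun _ _ => ha.mul_right B) (by simp)
    (.of_forall fun θ _ => by
      simp only [hexp]
      simpa only [Complex.ofReal_mul, mul_assoc, mul_left_comm] using
        (hf θ).mul_right ((g θ : ℂ) * Complex.exp (-I * n * θ)))
  simpa only [fourierC, intervalIntegral.integral_const_mul, mul_left_comm] using
    hswap.mul_left (1 / (2 * π) : ℂ)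

end FourierCoefficients

section FourierMultipliers

variable {f g : ℝ → ℝ} {m : ℤ → ℂ}

/-- The Bessel operator `1 - ∂²`. Its powers turn sup bounds into decay of Fourier coefficients
that is uniform in `n`, the zero mode included. -/
noncomputable def besselOp (f : ℝ → ℝ) (θ : ℝ) : ℝ :=
  f θ - deriv (deriv f) θ

protected lemma SmoothPeriodic.besselOp (hf : SmoothPeriodic f) : SmoothPeriodic (besselOp f) :=
  hf.sub hf.deriv.deriv

lemma SmoothPeriodic.iterate_besselOp (hf : SmoothPeriodic f) (k : ℕ) :
    SmoothPeriodic (besselOp^[k] f) :=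
  Function.Iterate.rec SmoothPeriodic hf (fun _ => SmoothPeriodic.besselOp) k

lemma SmoothPeriodic.fourierC_besselOp (hf : SmoothPeriodic f) (n : ℤ) :
    fourierC (besselOp f) n = (1 + (n : ℂ) ^ 2) * fourierC f n := by
  have hsub : besselOp f = fun θ => f θ + -deriv (deriv f) θ :=
    funext fun θ => sub_eq_add_neg _ _
  rw [hsub, fourierC_add hf.continuous hf.deriv.deriv.neg.continuous, fourierC_neg,
    hf.deriv.fourierC_deriv, hf.fourierC_deriv]
  linear_combination -(n : ℂ) ^ 2 * fourierC f n * Complex.I_sq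

lemma SmoothPeriodic.fourierC_iterate_besselOp (hf : SmoothPeriodic f) (k : ℕ) (n : ℤ) :
    fourierC (besselOp^[k] f) n = (1 + (n : ℂ) ^ 2) ^ k * fourierC f n := by
  induction k with
  | zero => simp
  | succ k ih =>
    rw [Function.iterate_succ_apply', (hf.iterate_besselOp k).fourierC_besselOp, ih]
    ring

lemma SmoothPeriodic.pow_mul_norm_fourierC_le (hf : SmoothPeriodic f) {k : ℕ} {B : ℝ}
    (hB : ∀ θ ∈ Set.Icc 0 (2 * π), |besselOp^[k] f θ| ≤ B) (n : ℤ) :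
    (1 + (n : ℝ) ^ 2) ^ k * ‖fourierC f n‖ ≤ B := by
  have hweight : ‖1 + (n : ℂ) ^ 2‖ = 1 + (n : ℝ) ^ 2 := by
    rw [← Complex.norm_of_nonneg (by positivity : (0 : ℝ) ≤ 1 + (n : ℝ) ^ 2)]
    push_cast
    rfl
  simpa [hf.fourierC_iterate_besselOp, hweight] using norm_fourierC_le hB n

lemma summable_inv_one_add_int_sq : Summable fun n : ℤ => (1 + (n : ℝ) ^ 2)⁻¹ := by
  refine (Real.summable_one_div_int_pow (p := 2).2 one_lt_two).of_norm_bounded_eventually ?_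
  filter_upwards [(Set.finite_singleton (0 : ℤ)).compl_mem_cofinite] with n hn
  have : (n : ℝ) ≠ 0 := Int.cast_ne_zero.2 hn
  rw [norm_of_nonneg (by positivity), ← one_div]
  gcongr
  linarith

/-- The Fourier multiplier with symbol `m`, i.e. `Σ cₙ e^{inθ} ↦ Σ m(n) cₙ e^{inθ}`. The real part
is the identity when `m` satisfies `IsRealSymbol.conj_symm`. -/
noncomputable def fourierMul (m : ℤ → ℂ) (f : ℝ → ℝ) (θ : ℝ) : ℝ :=
  (∑' n : ℤ, m n * fourierC f n * Complex.exp (I * n * θ)).re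

/-- The symbol `m` is Hermitian, so that its Fourier multiplier preserves real functions, and
grows at most polynomially, so that it preserves smooth functions. -/
structure IsRealSymbol (m : ℤ → ℂ) : Prop where
  conj_symm : ∀ n, m (-n) = conj (m n)
  polyGrowth : ∃ (C : ℝ) (k : ℕ), ∀ n : ℤ, ‖m n‖ ≤ C * (1 + (n : ℝ) ^ 2) ^ k

namespace IsRealSymbol

protected lemma one : IsRealSymbol 1 :=
  ⟨fun n => by simp, 1, 0, fun n => by simp⟩

lemma exists_norm_mul_fourierC_le (hm : IsRealSymbol m) :
    ∃ (C : ℝ) (k : ℕ), ∀ ⦃f : ℝ → ℝ⦄ ⦃B : ℝ⦄, SmoothPeriodic f →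
      (∀ θ ∈ Set.Icc 0 (2 * π), |besselOp^[k] f θ| ≤ B) →
      ∀ n : ℤ, ‖m n * fourierC f n‖ ≤ C * B * (1 + (n : ℝ) ^ 2)⁻¹ := by
  obtain ⟨C, k, hC⟩ := hm.polyGrowth
  have hC₀ : 0 ≤ C := (norm_nonneg _).trans (by simpa using hC 0)
  refine ⟨C, k + 1, fun f B hf hB n => ?_⟩
  have hweight : (0 : ℝ) < 1 + (n : ℝ) ^ 2 := by positivity
  rw [← div_eq_mul_inv, le_div_iff₀ hweight, norm_mul]
  calc ‖m n‖ * ‖fourierC f n‖ * (1 + (n : ℝ) ^ 2)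
      ≤ C * (1 + (n : ℝ) ^ 2) ^ k * ‖fourierC f n‖ * (1 + (n : ℝ) ^ 2) := by gcongr; exact hC n
    _ = C * ((1 + (n : ℝ) ^ 2) ^ (k + 1) * ‖fourierC f n‖) := by ring
    _ ≤ C * B := by gcongr; exact hf.pow_mul_norm_fourierC_le hB n

lemma summable (hm : IsRealSymbol m) (hf : SmoothPeriodic f) :
    Summable fun n => ‖m n * fourierC f n‖ := by
  obtain ⟨C, k, hC⟩ := hm.exists_norm_mul_fourierC_le
  obtain ⟨B, hB⟩ := (hf.iterate_besselOp k).exists_abs_le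
  exact (summable_inv_one_add_int_sq.mul_left (C * B)).of_nonneg_of_le (fun n => norm_nonneg _)
    (hC hf fun θ _ => hB θ)

lemma hasSum (hm : IsRealSymbol m) (hf : SmoothPeriodic f) (θ : ℝ) :
    HasSum (fun n : ℤ => m n * fourierC f n * Complex.exp (I * n * θ)) (fourierMul m f θ : ℂ) := by
  set z := ∑' n : ℤ, m n * fourierC f n * Complex.exp (I * n * θ)
  have hz : HasSum (fun n : ℤ => m n * fourierC f n * Complex.exp (I * n * θ)) z :=
    (Summable.of_norm (by simpa [norm_mul, norm_exp_I_mul] using hm.summable hf)).hasSum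
  have hconj : HasSum (fun n : ℤ => m n * fourierC f n * Complex.exp (I * n * θ)) (conj z) := by
    rw [← (Equiv.neg ℤ).hasSum_iff]
    convert Complex.hasSum_conj'.2 hz using 2 with n
    simp [hm.conj_symm, fourierC_neg_index, ← Complex.exp_conj]
  rw [fourierMul, Complex.conj_eq_iff_re.1 (hconj.unique hz)]
  exact hz

lemma continuous_fourierMul (hm : IsRealSymbol m) (hf : SmoothPeriodic f) :
    Continuous (fourierMul m f) :=
  Complex.continuous_re.comp <| continuous_tsum (fun n => by fun_prop) (hm.summable hf)
    fun n θ => by rw [norm_mul, norm_exp_I_mul, mul_one]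

lemma fourierC_fourierMul (hm : IsRealSymbol m) (hf : SmoothPeriodic f) (n : ℤ) :
    fourierC (fourierMul m f) n = m n * fourierC f n := by
  have hconv := hasSum_fourierC_mul (hm.summable hf) (hm.hasSum hf) (continuous_const (y := 1)) n
  simp only [mul_one, fourierC_one, mul_ite, mul_zero] at hconv
  have hsingle := hasSum_single (f := fun j => if n - j = 0 then m j * fourierC f j else 0) n
    fun j hj => if_neg (sub_ne_zero.2 hj.symm)
  simpa using hconv.unique hsingle

lemma hasDerivAt_fourierMul (hm : IsRealSymbol m) (hf : SmoothPeriodic f) (θ : ℝ) :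
    HasDerivAt (fourierMul m f) (fourierMul m (deriv f) θ) θ := by
  have hterm : ∀ (n : ℤ) (x : ℝ),
      HasDerivAt (fun y : ℝ => m n * fourierC f n * Complex.exp (I * n * y))
        (m n * fourierC (deriv f) n * Complex.exp (I * n * x)) x := fun n x => by
    rw [hf.fourierC_deriv]
    exact ((hasDerivAt_exp_mul (I * n) x).const_mul (m n * fourierC f n)).congr_deriv (by ring)
  have htsum := hasDerivAt_tsum (hm.summable hf.deriv) hterm
    (fun n x => by rw [norm_mul, norm_exp_I_mul, mul_one]) (hm.hasSum hf 0).summable θ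
  exact Complex.reCLM.hasFDerivAt.comp_hasDerivAt θ htsum

lemma deriv_fourierMul (hm : IsRealSymbol m) (hf : SmoothPeriodic f) :
    deriv (fourierMul m f) = fourierMul m (deriv f) :=
  funext fun θ => (hm.hasDerivAt_fourierMul hf θ).deriv

lemma smoothPeriodic_fourierMul (hm : IsRealSymbol m) (hf : SmoothPeriodic f) :
    SmoothPeriodic (fourierMul m f) where
  contDiff := by
    refine contDiff_infty.2 fun N => ?_
    induction N generalizing f with
    | zero => exact contDiff_zero.2 (hm.continuous_fourierMul hf)
    | succ N ih =>
      refine contDiff_succ_iff_deriv (n := (N : ℕ∞)).2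
        ⟨fun θ => (hm.hasDerivAt_fourierMul hf θ).differentiableAt, by simp, ?_⟩
      rw [hm.deriv_fourierMul hf]
      exact ih hf.deriv
  periodic θ := by
    have hexp : ∀ n : ℤ, Complex.exp (I * n * (θ + 2 * π : ℝ)) = Complex.exp (I * n * θ) :=
      fun n => Complex.exp_eq_exp_iff_exists_int.2 ⟨n, by push_cast; ring⟩
    simp only [fourierMul, hexp]

end IsRealSymbol

namespace SmoothPeriodic

lemma summable_norm_fourierC (hf : SmoothPeriodic f) : Summable fun n => ‖fourierC f n‖ := by
  simpa using IsRealSymbol.one.summable hf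

lemma hasSum_fourierC (hf : SmoothPeriodic f) (θ : ℝ) :
    HasSum (fun n : ℤ => fourierC f n * Complex.exp (I * n * θ)) (f θ : ℂ) :=
  EulerWeilPetersson.hasSum_fourierC hf.continuous hf.periodic hf.summable_norm_fourierC.of_norm θ

lemma hasSum_fourierC_mul (hf : SmoothPeriodic f) (hg : SmoothPeriodic g) (n : ℤ) :
    HasSum (fun j => fourierC f j * fourierC g (n - j)) (fourierC (fun θ => f θ * g θ) n) :=
  EulerWeilPetersson.hasSum_fourierC_mul hf.summable_norm_fourierC hf.hasSum_fourierC
    hg.continuous n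

lemma hasSum_inner_fourierC (hf : SmoothPeriodic f) (hg : SmoothPeriodic g) :
    HasSum (fun n => inner ℝ (fourierC f n) (fourierC g n))
      ((2 * π)⁻¹ * ∫ θ in (0 : ℝ)..(2 * π), f θ * g θ) := by
  have hzero : fourierC (fun θ => f θ * g θ) 0 =
      (((2 * π)⁻¹ * ∫ θ in (0 : ℝ)..(2 * π), f θ * g θ : ℝ) : ℂ) := by
    simp [fourierC, ← intervalIntegral.integral_ofReal]
  convert Complex.hasSum_re (hzero ▸ hf.hasSum_fourierC_mul hg 0) using 2 with n
  · rw [zero_sub, fourierC_neg_index, real_inner_comm, Complex.inner, mul_comm]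
  · rw [Complex.ofReal_re]

lemma enorm_le_tsum_enorm_fourierC (hf : SmoothPeriodic f) (θ : ℝ) :
    ‖f θ‖ₑ ≤ ∑' n, ‖fourierC f n‖ₑ := by
  calc ‖f θ‖ₑ = ‖∑' n : ℤ, fourierC f n * Complex.exp (I * n * θ)‖ₑ := by
        rw [(hf.hasSum_fourierC θ).tsum_eq, ← ofReal_norm, ← ofReal_norm, Complex.norm_real]
    _ ≤ ∑' n : ℤ, ‖fourierC f n * Complex.exp (I * n * θ)‖ₑ := enorm_tsum_le_tsum_enorm
    _ = ∑' n, ‖fourierC f n‖ₑ := by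
        refine tsum_congr fun n => enorm_eq_iff_norm_eq.2 ?_
        rw [norm_mul, norm_exp_I_mul, mul_one]

end SmoothPeriodic

end FourierMultipliers

section Vorticity

variable {v : ℝ → ℝ}

/-- The symbol `|n| (n² - 1)` of the Weil–Petersson inertia operator `-H(∂³ + ∂)`, with a real
argument so that it can be manipulated on the sign sectors of the frequency plane. -/
noncomputable def vorticitySymbol (n : ℝ) : ℝ :=
  |n| * (n ^ 2 - 1)

lemma vorticitySymbol_neg (n : ℝ) : vorticitySymbol (-n) = vorticitySymbol n := by
  simp [vorticitySymbol]

lemma vorticitySymbol_eq_zero_iff {n : ℤ} : vorticitySymbol n = 0 ↔ n.natAbs ≤ 1 := by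
  rw [vorticitySymbol, mul_eq_zero, abs_eq_zero, sub_eq_zero, sq_eq_one_iff]
  norm_cast
  omega

lemma vorticitySymbol_nonneg (n : ℤ) : 0 ≤ vorticitySymbol n := by
  rcases le_or_gt n.natAbs 1 with hn | hn
  · exact (vorticitySymbol_eq_zero_iff.2 hn).ge
  · have hn' : (1 : ℝ) ≤ |(n : ℝ)| := by exact_mod_cast Int.one_le_abs (by omega : n ≠ 0)
    exact mul_nonneg (abs_nonneg _) (sub_nonneg.2 ((one_le_sq_iff_one_le_abs _).2 hn'))

lemma vorticitySymbol_eq_sign_mul (n : ℤ) :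
    vorticitySymbol n = n.sign * (n * ((n : ℝ) ^ 2 - 1)) := by
  rw [vorticitySymbol, ← mul_assoc, ← Int.cast_abs, ← Int.sign_mul_self_eq_abs, Int.cast_mul]

lemma isRealSymbol_vorticitySymbol :
    IsRealSymbol fun n : ℤ => (vorticitySymbol n : ℂ) where
  conj_symm n := by simp [vorticitySymbol_neg]
  polyGrowth := by
    refine ⟨1, 2, fun n => ?_⟩
    rw [Complex.norm_real, norm_of_nonneg (vorticitySymbol_nonneg n), vorticitySymbol]
    nlinarith [sq_abs (n : ℝ), sq_nonneg (|(n : ℝ)| - 1), abs_nonneg (n : ℝ),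
      mul_nonneg (sq_nonneg (n : ℝ)) (sq_nonneg (|(n : ℝ)| - 1))]

lemma isRealSymbol_hilbert : IsRealSymbol fun n : ℤ => -I * (n.sign : ℂ) where
  conj_symm n := by simp
  polyGrowth := by
    refine ⟨1, 0, fun n => ?_⟩
    rcases lt_trichotomy n 0 with hn | rfl | hn
    · simp [Int.sign_eq_neg_one_of_neg hn]
    · simp
    · simp [Int.sign_eq_one_of_pos hn]

lemma hilbertT_eq_fourierMul (f : ℝ → ℝ) :
    hilbertT f = fourierMul (fun n => -I * (n.sign : ℂ)) f := rfl

/-- The vorticity `ω = -H(v‴ + v′)` of a velocity field `v` on the circle. -/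
noncomputable def vorticity (v : ℝ → ℝ) (θ : ℝ) : ℝ :=
  -hilbertT (fun x => deriv (deriv (deriv v)) x + deriv v x) θ

lemma SmoothPeriodic.deriv_three_add_deriv (hv : SmoothPeriodic v) :
    SmoothPeriodic fun x => deriv (deriv (deriv v)) x + deriv v x :=
  hv.deriv.deriv.deriv.add hv.deriv

lemma SmoothPeriodic.fourierC_deriv_three_add_deriv (hv : SmoothPeriodic v) (n : ℤ) :
    fourierC (fun x => deriv (deriv (deriv v)) x + deriv v x) n =
      -I * (n * ((n : ℂ) ^ 2 - 1)) * fourierC v n := by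
  rw [fourierC_add hv.deriv.deriv.deriv.continuous hv.deriv.continuous,
    hv.deriv.deriv.fourierC_deriv, hv.deriv.fourierC_deriv, hv.fourierC_deriv]
  linear_combination I * (n : ℂ) ^ 3 * fourierC v n * Complex.I_sq

lemma vorticity_eq_fourierMul (hv : SmoothPeriodic v) :
    vorticity v = fourierMul (fun n : ℤ => (vorticitySymbol n : ℂ)) v := by
  ext θ
  simp only [vorticity, hilbertT, fourierMul, ← Complex.neg_re, ← tsum_neg]
  congr 2 with n
  rw [hv.fourierC_deriv_three_add_deriv, vorticitySymbol_eq_sign_mul]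
  push_cast
  linear_combination -(n.sign : ℂ) * (n * ((n : ℂ) ^ 2 - 1)) * fourierC v n *
    Complex.exp (I * n * θ) * Complex.I_sq

protected lemma SmoothPeriodic.vorticity (hv : SmoothPeriodic v) :
    SmoothPeriodic (vorticity v) := by
  rw [vorticity_eq_fourierMul hv]
  exact isRealSymbol_vorticitySymbol.smoothPeriodic_fourierMul hv

lemma fourierC_vorticity (hv : SmoothPeriodic v) (n : ℤ) :
    fourierC (vorticity v) n = vorticitySymbol n * fourierC v n := by
  rw [vorticity_eq_fourierMul hv, isRealSymbol_vorticitySymbol.fourierC_fourierMul hv]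

/-- The Weil–Petersson energy `Σ |n| (n² - 1) |v̂ₙ|²` of a velocity field, a squared `Ḣ^{3/2}`
seminorm, normalised without the factor `2π` of its integral form. -/
noncomputable def energy (v : ℝ → ℝ) : ℝ :=
  ∑' n : ℤ, vorticitySymbol n * ‖fourierC v n‖ ^ 2

lemma SmoothPeriodic.summable_energy (hv : SmoothPeriodic v) :
    Summable fun n : ℤ => vorticitySymbol n * ‖fourierC v n‖ ^ 2 := by
  refine (hv.hasSum_inner_fourierC hv.vorticity).summable.congr fun n => ?_
  rw [fourierC_vorticity hv, ← Complex.real_smul, real_inner_smul_right, real_inner_self_eq_norm_sq]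

lemma integral_hilbertT_mul_eq_energy (hv : SmoothPeriodic v) :
    ∫ θ in (0 : ℝ)..(2 * π), hilbertT v θ * (deriv (deriv (deriv v)) θ + deriv v θ) =
      2 * π * energy v := by
  have hparseval := ((isRealSymbol_hilbert.smoothPeriodic_fourierMul hv).hasSum_inner_fourierC
    hv.deriv_three_add_deriv).tsum_eq
  rw [hilbertT_eq_fourierMul, ← mul_inv_cancel_left₀ two_pi_pos.ne' (∫ _ in _.._, _),
    ← hparseval, energy]
  congr 2 with n
  rw [isRealSymbol_hilbert.fourierC_fourierMul hv, hv.fourierC_deriv_three_add_deriv,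
    vorticitySymbol_eq_sign_mul, Complex.inner]
  rw [← Complex.ofReal_re (_ * ‖fourierC v n‖ ^ 2)]
  congr 1
  push_cast
  simp only [← Complex.conj_mul', map_mul, map_neg, Complex.conj_I, map_intCast]
  linear_combination -(n.sign : ℂ) * (n * ((n : ℂ) ^ 2 - 1)) *
    (conj (fourierC v n) * fourierC v n) * Complex.I_sq

/-- The nonlinearity `v ω′ + 2 v′ ω` of the Euler–Weil–Petersson equation, `ω` being the vorticity
of `v`. -/
noncomputable def vorticityAdvection (v : ℝ → ℝ) (θ : ℝ) : ℝ :=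
  v θ * deriv (vorticity v) θ + 2 * deriv v θ * vorticity v θ

/-- Coadjoint orthogonality: the integrand is the total derivative `(v² ω)′`. -/
lemma integral_mul_vorticityAdvection (hv : SmoothPeriodic v) :
    ∫ θ in (0 : ℝ)..(2 * π), v θ * vorticityAdvection v θ = 0 := by
  have hderiv : (fun θ => v θ * vorticityAdvection v θ) =
      deriv fun θ => v θ * v θ * vorticity v θ := by
    ext θ
    rw [(((hv.hasDerivAt θ).fun_mul (hv.hasDerivAt θ)).fun_mul (hv.vorticity.hasDerivAt θ)).deriv,
      vorticityAdvection]
    ring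
  rw [hderiv, ((hv.mul hv).mul hv.vorticity).integral_deriv_eq_zero]

lemma hasSum_fourierC_vorticityAdvection (hv : SmoothPeriodic v) (n : ℤ) :
    HasSum (fun j : ℤ => I * ((n - j : ℤ) + 2 * j) * vorticitySymbol (n - j : ℤ) *
      (fourierC v j * fourierC v (n - j))) (fourierC (vorticityAdvection v) n) := by
  have hadd := (hv.hasSum_fourierC_mul hv.vorticity.deriv n).add
    (((SmoothPeriodic.const 2).mul hv.deriv).hasSum_fourierC_mul hv.vorticity n)
  convert hadd using 1
  · ext j
    rw [fourierC_const_mul, hv.fourierC_deriv, hv.vorticity.fourierC_deriv,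
      fourierC_vorticity hv]
    push_cast
    ring
  · exact fourierC_add (hv.mul hv.vorticity.deriv).continuous
      (((SmoothPeriodic.const 2).mul hv.deriv).mul hv.vorticity).continuous n

end Vorticity

section MaterialSymbol

/-- The symbol of the material derivative of `u_θ`, as a bilinear expression in `u`: it pairs the
modes `j` and `k` into the mode `j + k`. The first term comes from inverting the inertia operator
in the equation for `u_t`, the second one is the symbol of `u u_θθ`. At `j + k ∈ {0, 1, -1}` the
junk value `x / 0 = 0` is the intended one, since `u_t` has no such modes. -/
noncomputable def materialSymbol (j k : ℝ) : ℝ :=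
  (j + k) / vorticitySymbol (j + k) * ((k + 2 * j) * vorticitySymbol k) - k ^ 2

/-- Twice the symmetric part of `materialSymbol`: only this part survives in the quadratic form,
and in it the leading-order terms of the two summands of `materialSymbol` cancel. -/
noncomputable def symMaterialSymbol (j k : ℝ) : ℝ :=
  materialSymbol j k + materialSymbol k j

variable {j k : ℝ}

lemma symMaterialSymbol_comm (j k : ℝ) : symMaterialSymbol j k = symMaterialSymbol k j :=
  add_comm _ _

lemma materialSymbol_neg_neg (j k : ℝ) : materialSymbol (-j) (-k) = materialSymbol j k := by
  rw [materialSymbol, ← neg_add, vorticitySymbol_neg, vorticitySymbol_neg, materialSymbol]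
  ring

lemma symMaterialSymbol_neg_neg (j k : ℝ) :
    symMaterialSymbol (-j) (-k) = symMaterialSymbol j k := by
  simp only [symMaterialSymbol, materialSymbol_neg_neg]

lemma symMaterialSymbol_of_pos_of_pos (hj : 0 < j) (hk : 0 < k) (hjk : (j + k) ^ 2 - 1 ≠ 0) :
    symMaterialSymbol j k = -(2 * (j * k) * (j * k + 2) / ((j + k) ^ 2 - 1)) := by
  have : j + k ≠ 0 := (add_pos hj hk).ne'
  simp only [symMaterialSymbol, materialSymbol, vorticitySymbol, add_comm k j, abs_of_pos hj,
    abs_of_pos hk, abs_of_pos (add_pos hj hk)]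
  field

lemma symMaterialSymbol_of_neg_of_add_pos (hk : k < 0) (hsum : 0 < j + k)
    (hjk : (j + k) ^ 2 - 1 ≠ 0) : symMaterialSymbol j k = -(2 * k ^ 2) := by
  have hj : 0 < j := by linarith
  simp only [symMaterialSymbol, materialSymbol, vorticitySymbol, add_comm k j, abs_of_pos hj,
    abs_of_neg hk, abs_of_pos hsum]
  field

lemma symMaterialSymbol_of_natAbs_add_le_one {j k : ℤ} (hsum : (j + k).natAbs ≤ 1) :
    symMaterialSymbol j k = -((j : ℝ) ^ 2 + (k : ℝ) ^ 2) := by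
  have hzero : vorticitySymbol ((j : ℝ) + k) = 0 := mod_cast vorticitySymbol_eq_zero_iff.2 hsum
  simp only [symMaterialSymbol, materialSymbol, add_comm (k : ℝ) j, hzero]
  ring

lemma abs_symMaterialSymbol_mul_le_of_two_le (hj : 2 ≤ j) (hk : 2 ≤ k) :
    |symMaterialSymbol j k| * (j ^ 2 + k ^ 2) ≤ 8 * (j ^ 2 * k ^ 2) := by
  have hden : 0 < (j + k) ^ 2 - 1 := by nlinarith
  have hjk : 4 ≤ j * k := by nlinarith
  rw [symMaterialSymbol_of_pos_of_pos (by linarith) (by linarith) hden.ne', abs_neg,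
    abs_of_nonneg (by positivity), div_mul_eq_mul_div, div_le_iff₀ hden]
  calc 2 * (j * k) * (j * k + 2) * (j ^ 2 + k ^ 2)
      ≤ 2 * (j * k) * (4 * (j * k)) * ((j + k) ^ 2 - 1) := by gcongr <;> nlinarith
    _ = 8 * (j ^ 2 * k ^ 2) * ((j + k) ^ 2 - 1) := by ring

lemma abs_symMaterialSymbol_mul_le_of_neg (hk : k < 0) (hsum : 2 ≤ j + k) :
    |symMaterialSymbol j k| * (j ^ 2 + k ^ 2) ≤ 8 * (j ^ 2 * k ^ 2) := by
  have hkj : k ^ 2 ≤ j ^ 2 := sq_le_sq' (by linarith) (by linarith)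
  rw [symMaterialSymbol_of_neg_of_add_pos hk (by linarith) (by nlinarith), abs_neg,
    abs_of_nonneg (by positivity)]
  calc 2 * k ^ 2 * (j ^ 2 + k ^ 2) ≤ 2 * k ^ 2 * (j ^ 2 + j ^ 2) := by gcongr
    _ ≤ 8 * (j ^ 2 * k ^ 2) := by nlinarith [mul_nonneg (sq_nonneg j) (sq_nonneg k)]

lemma abs_symMaterialSymbol_mul_le_of_natAbs_add_le_one {j k : ℤ} (hj : 2 ≤ j.natAbs)
    (hk : 2 ≤ k.natAbs) (hsum : (j + k).natAbs ≤ 1) :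
    |symMaterialSymbol j k| * ((j : ℝ) ^ 2 + (k : ℝ) ^ 2) ≤ 8 * ((j : ℝ) ^ 2 * (k : ℝ) ^ 2) := by
  have hsq : ∀ i : ℤ, 2 ≤ i.natAbs → 4 ≤ i ^ 2 := fun i hi => by
    rcases (by omega : 2 ≤ i ∨ i ≤ -2) with hpos | hneg <;> nlinarith
  have hsum_sq : (j + k) ^ 2 ≤ 1 := by
    rw [← Int.natAbs_sq]
    exact_mod_cast Nat.pow_le_one_iff two_ne_zero |>.2 hsum
  have hneg : j * k < 0 := by nlinarith [hsq j hj, hsq k hk]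
  rw [symMaterialSymbol_of_natAbs_add_le_one hsum, abs_neg, abs_of_nonneg (by positivity)]
  norm_cast
  have hle : j ^ 2 + k ^ 2 ≤ 1 - 2 * (j * k) := by linarith [sq_nonneg (j + k)]
  calc (j ^ 2 + k ^ 2) * (j ^ 2 + k ^ 2)
      ≤ (1 - 2 * (j * k)) * (1 - 2 * (j * k)) := by gcongr; linarith
    _ ≤ 8 * (j ^ 2 * k ^ 2) := by nlinarith [hsq j hj, hsq k hk]

lemma abs_symMaterialSymbol_mul_le {j k : ℤ} (hj : 2 ≤ j.natAbs) (hk : 2 ≤ k.natAbs) :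
    |symMaterialSymbol j k| * ((j : ℝ) ^ 2 + (k : ℝ) ^ 2) ≤ 8 * ((j : ℝ) ^ 2 * (k : ℝ) ^ 2) := by
  wlog hsum : 0 ≤ j + k generalizing j k
  · have := this (j := -j) (k := -k) (by simpa) (by simpa) (by omega)
    push_cast at this
    rwa [symMaterialSymbol_neg_neg, neg_sq, neg_sq] at this
  wlog hkj : k ≤ j generalizing j k
  · rw [symMaterialSymbol_comm, add_comm (_ ^ 2), mul_comm (_ ^ 2)]
    exact this hk hj (by omega) (by omega)
  rcases le_or_gt (j + k) 1 with hsmall | hlarge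
  · exact abs_symMaterialSymbol_mul_le_of_natAbs_add_le_one hj hk (by omega)
  rcases lt_or_ge k 0 with hneg | hpos
  · exact abs_symMaterialSymbol_mul_le_of_neg (mod_cast hneg) (by exact_mod_cast hlarge)
  · exact abs_symMaterialSymbol_mul_le_of_two_le (by exact_mod_cast (by omega : 2 ≤ j))
      (by exact_mod_cast (by omega : 2 ≤ k))

end MaterialSymbol

section QuadraticEstimate

lemma sum_range_inv_sq_add_sq_le {J : ℝ} (hJ : 1 ≤ J) (N : ℕ) :
    ∑ k ∈ Finset.range N, (J ^ 2 + (k : ℝ) ^ 2)⁻¹ ≤ 4 * (J⁻¹ - (J + N)⁻¹) := by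
  induction N with
  | zero => simp
  | succ N ih =>
    have : (0 : ℝ) ≤ N := N.cast_nonneg
    have hstep : (J ^ 2 + (N : ℝ) ^ 2)⁻¹ ≤ 4 * ((J + N)⁻¹ - (J + (N + 1 : ℕ))⁻¹) := by
      have htelescope : 4 * ((J + N)⁻¹ - (J + (N + 1 : ℕ))⁻¹) =
          4 / ((J + N) * (J + N + 1)) := by
        push_cast
        field
      rw [htelescope, inv_eq_one_div, div_le_div_iff₀ (by positivity) (by positivity)]
      nlinarith [sq_nonneg (J - N)]
    rw [Finset.sum_range_succ]
    linarith

lemma tsum_int_ofReal_inv_sq_add_sq_le {J : ℝ} (hJ : 1 ≤ |J|) :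
    ∑' k : ℤ, ENNReal.ofReal (J ^ 2 + (k : ℝ) ^ 2)⁻¹ ≤ ENNReal.ofReal (8 / |J|) := by
  have hnat : ∑' k : ℕ, ENNReal.ofReal (J ^ 2 + (k : ℝ) ^ 2)⁻¹ ≤ ENNReal.ofReal (4 / |J|) := by
    refine ENNReal.tsum_le_of_sum_range_le fun N => ?_
    rw [← ENNReal.ofReal_sum_of_nonneg fun _ _ => by positivity, ← sq_abs J]
    refine ENNReal.ofReal_le_ofReal ((sum_range_inv_sq_add_sq_le hJ N).trans ?_)
    rw [div_eq_mul_inv]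
    gcongr
    exact sub_le_self _ (by positivity)
  have hneg : ∀ k : ℕ, ENNReal.ofReal (J ^ 2 + ((-(k + 1 : ℤ) : ℤ) : ℝ) ^ 2)⁻¹ ≤
      ENNReal.ofReal (J ^ 2 + (k : ℝ) ^ 2)⁻¹ := fun k => by
    have : 0 < J ^ 2 := by rw [← sq_abs]; positivity
    push_cast
    rw [neg_sq]
    gcongr
    linarith
  calc ∑' k : ℤ, ENNReal.ofReal (J ^ 2 + (k : ℝ) ^ 2)⁻¹
      = ∑' k : ℕ, ENNReal.ofReal (J ^ 2 + (k : ℝ) ^ 2)⁻¹ +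
          ∑' k : ℕ, ENNReal.ofReal (J ^ 2 + ((-(k + 1 : ℤ) : ℤ) : ℝ) ^ 2)⁻¹ := by
        exact_mod_cast tsum_of_nat_of_neg_add_one ENNReal.summable ENNReal.summable
    _ ≤ ENNReal.ofReal (4 / |J|) + ENNReal.ofReal (4 / |J|) :=
        add_le_add hnat ((ENNReal.tsum_le_tsum hneg).trans hnat)
    _ = ENNReal.ofReal (8 / |J|) := by
        rw [← ENNReal.ofReal_add (by positivity) (by positivity)]
        ring_nf

lemma tsum_tsum_sub_right {G : Type*} [AddGroup G] (q : G → G → ℝ≥0∞) :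
    ∑' n, ∑' j, q j (n - j) = ∑' j, ∑' k, q j k := by
  rw [ENNReal.tsum_comm]
  exact tsum_congr fun j => (Equiv.subRight j).tsum_eq (q j)

lemma tsum_tsum_sub_left {G : Type*} [AddCommGroup G] (q : G → G → ℝ≥0∞) :
    ∑' n, ∑' j, q (n - j) j = ∑' j, ∑' k, q j k := by
  refine .trans (tsum_congr fun n => ?_) (tsum_tsum_sub_right q)
  simpa using (Equiv.subLeft n).tsum_eq fun j => q j (n - j)

lemma hasSum_symmetrize {G 𝕜 : Type*} [AddCommGroup G] [Field 𝕜] [CharZero 𝕜]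
    [TopologicalSpace 𝕜] [IsTopologicalRing 𝕜] {F : G → G → 𝕜} {n : G} {z : 𝕜}
    (h : HasSum (fun j => F j (n - j)) z) :
    HasSum (fun j => (F j (n - j) + F (n - j) j) / 2) z := by
  have hswap : HasSum (fun j => F (n - j) j) z := by
    rw [← (Equiv.subLeft n).hasSum_iff]
    simpa [Function.comp_def] using h
  simpa using (h.add hswap).div_const 2

/-- The Schur-test majorant of the interaction of the modes `j` and `k`, the weight of the mode `k`
being left to `schurWeight c k j`. -/
noncomputable def schurWeight (c : ℤ → ℂ) (j k : ℤ) : ℝ≥0∞ :=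
  ENNReal.ofReal (2 * (j : ℝ) ^ 4 * ‖c j‖ ^ 2 * ((j : ℝ) ^ 2 + (k : ℝ) ^ 2)⁻¹)

variable {c : ℤ → ℂ}

lemma enorm_symMaterialSymbol_mul_le (hc : ∀ n : ℤ, n.natAbs ≤ 1 → c n = 0) (j k : ℤ) :
    ‖((symMaterialSymbol j k / 2 : ℝ) : ℂ) * (c j * c k)‖ₑ ≤
      schurWeight c j k + schurWeight c k j := by
  rcases le_or_gt j.natAbs 1 with hj | hj
  · simp [hc j hj]
  rcases le_or_gt k.natAbs 1 with hk | hk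
  · simp [hc k hk]
  have hpos : 0 < (j : ℝ) ^ 2 + (k : ℝ) ^ 2 := by
    have : (j : ℝ) ≠ 0 := Int.cast_ne_zero.2 (by omega)
    positivity
  have hsymbol := (le_div_iff₀ hpos).2 (abs_symMaterialSymbol_mul_le hj hk)
  rw [schurWeight, schurWeight, ← ENNReal.ofReal_add (by positivity) (by positivity),
    ← ofReal_norm]
  refine ENNReal.ofReal_le_ofReal ?_
  calc ‖((symMaterialSymbol j k / 2 : ℝ) : ℂ) * (c j * c k)‖
      = |symMaterialSymbol j k| / 2 * (‖c j‖ * ‖c k‖) := by simp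
    _ ≤ 8 * ((j : ℝ) ^ 2 * (k : ℝ) ^ 2) / ((j : ℝ) ^ 2 + (k : ℝ) ^ 2) / 2 *
          (‖c j‖ * ‖c k‖) := by gcongr
    _ = 2 * (2 * ((j : ℝ) ^ 2 * ‖c j‖) * ((k : ℝ) ^ 2 * ‖c k‖)) *
          ((j : ℝ) ^ 2 + (k : ℝ) ^ 2)⁻¹ := by ring
    _ ≤ 2 * (((j : ℝ) ^ 2 * ‖c j‖) ^ 2 + ((k : ℝ) ^ 2 * ‖c k‖) ^ 2) *
          ((j : ℝ) ^ 2 + (k : ℝ) ^ 2)⁻¹ := by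
        gcongr
        exact two_mul_le_add_sq _ _
    _ = _ := by rw [add_comm ((k : ℝ) ^ 2)]; ring

lemma tsum_schurWeight_le (hc : ∀ n : ℤ, n.natAbs ≤ 1 → c n = 0) (j : ℤ) :
    ∑' k, schurWeight c j k ≤ ENNReal.ofReal (32 * (vorticitySymbol j * ‖c j‖ ^ 2)) := by
  rcases le_or_gt j.natAbs 1 with hj | hj
  · simp [schurWeight, hc j hj]
  have hj' : 2 ≤ |(j : ℝ)| := by
    exact_mod_cast (by rw [Int.abs_eq_natAbs]; omega : 2 ≤ |j|)
  calc ∑' k, schurWeight c j k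
      = ENNReal.ofReal (2 * (j : ℝ) ^ 4 * ‖c j‖ ^ 2) *
          ∑' k : ℤ, ENNReal.ofReal ((j : ℝ) ^ 2 + (k : ℝ) ^ 2)⁻¹ := by
        simp only [schurWeight, ENNReal.ofReal_mul (by positivity : 0 ≤ 2 * (j : ℝ) ^ 4 *
          ‖c j‖ ^ 2), ENNReal.tsum_mul_left]
    _ ≤ ENNReal.ofReal (2 * (j : ℝ) ^ 4 * ‖c j‖ ^ 2) * ENNReal.ofReal (8 / |(j : ℝ)|) := by
        gcongr
        exact tsum_int_ofReal_inv_sq_add_sq_le (by linarith)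
    _ = ENNReal.ofReal (16 * (|(j : ℝ)| * (j : ℝ) ^ 2) * ‖c j‖ ^ 2) := by
        rw [← ENNReal.ofReal_mul (by positivity), ← sq_abs (j : ℝ), ← (by decide : Even 4).pow_abs]
        congr 1
        field
    _ ≤ ENNReal.ofReal (32 * vorticitySymbol j * ‖c j‖ ^ 2) := by
        refine ENNReal.ofReal_le_ofReal (mul_le_mul_of_nonneg_right ?_ (sq_nonneg _))
        rw [vorticitySymbol, ← sq_abs (j : ℝ)]
        nlinarith
    _ = ENNReal.ofReal (32 * (vorticitySymbol j * ‖c j‖ ^ 2)) := by rw [mul_assoc]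

lemma tsum_enorm_materialSymbol_le (hc : ∀ n : ℤ, n.natAbs ≤ 1 → c n = 0)
    (hs : Summable fun n : ℤ => vorticitySymbol n * ‖c n‖ ^ 2) {d : ℤ → ℂ}
    (hd : ∀ n, HasSum (fun j : ℤ => (materialSymbol j (n - j : ℤ) : ℂ) * (c j * c (n - j))) (d n)) :
    ∑' n, ‖d n‖ₑ ≤ ENNReal.ofReal (64 * ∑' n : ℤ, vorticitySymbol n * ‖c n‖ ^ 2) := by
  have hterm : ∀ n, ‖d n‖ₑ ≤ ∑' j, (schurWeight c j (n - j) + schurWeight c (n - j) j) := by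
    intro n
    have hsym := hasSum_symmetrize (F := fun j k : ℤ => (materialSymbol j k : ℂ) * (c j * c k))
      (hd n)
    rw [← hsym.tsum_eq]
    refine enorm_tsum_le_tsum_enorm.trans (ENNReal.tsum_le_tsum fun j => ?_)
    convert enorm_symMaterialSymbol_mul_le hc j (n - j) using 2
    rw [symMaterialSymbol]
    push_cast
    ring
  have hnonneg : ∀ n : ℤ, 0 ≤ vorticitySymbol n * ‖c n‖ ^ 2 := fun n =>
    mul_nonneg (vorticitySymbol_nonneg n) (sq_nonneg _)
  calc ∑' n, ‖d n‖ₑ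
      ≤ ∑' n, ∑' j, (schurWeight c j (n - j) + schurWeight c (n - j) j) :=
        ENNReal.tsum_le_tsum hterm
    _ = ∑' j, ∑' k, schurWeight c j k + ∑' j, ∑' k, schurWeight c j k := by
        simp only [ENNReal.tsum_add, tsum_tsum_sub_right, tsum_tsum_sub_left]
    _ = 2 * ∑' j, ∑' k, schurWeight c j k := (two_mul _).symm
    _ ≤ 2 * ∑' j : ℤ, ENNReal.ofReal (32 * (vorticitySymbol j * ‖c j‖ ^ 2)) := by
        gcongr with j
        exact tsum_schurWeight_le hc j
    _ = ENNReal.ofReal (64 * ∑' n : ℤ, vorticitySymbol n * ‖c n‖ ^ 2) := by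
        rw [← ENNReal.ofReal_tsum_of_nonneg (fun n => mul_nonneg (by simp) (hnonneg n))
          (hs.mul_left 32), tsum_mul_left, ← ENNReal.ofReal_ofNat 2,
          ← ENNReal.ofReal_mul zero_le_two]
        ring_nf

end QuadraticEstimate

section MaximumPrinciple

variable {X : Type*} [TopologicalSpace X] {S : Set X} {f f' : ℝ → X → ℝ} {a b K M : ℝ}

lemma nonneg_of_isMaxOn_of_hasDerivWithinAt {g : ℝ → ℝ} {g' t : ℝ} (hat : a < t)
    (hmax : IsMaxOn g (Set.Icc a t) t) (hg : HasDerivWithinAt g g' (Set.Icc a t) t) : 0 ≤ g' := by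
  have hle := hmax.localize.hasFDerivWithinAt_nonpos hg.hasFDerivWithinAt
    (sub_mem_posTangentConeAt_of_segment_subset
      (segment_symm ℝ a t ▸ segment_subset_Icc hat.le))
  simp only [ContinuousLinearMap.toSpanSingleton_apply, smul_eq_mul] at hle
  exact nonneg_of_mul_nonpos_right hle (sub_neg.2 hat)

lemma le_add_mul_of_deriv_lt_at_max (hS : IsCompact S) (hab : a ≤ b)
    (hf : ContinuousOn (fun p : ℝ × X => f p.1 p.2) (Set.Icc a b ×ˢ S))
    (hderiv : ∀ t ∈ Set.Ioc a b, ∀ x ∈ S,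
      HasDerivWithinAt (fun s => f s x) (f' t x) (Set.Icc a t) t)
    (hlt : ∀ t ∈ Set.Ioc a b, ∀ x ∈ S, IsMaxOn (f t) S x → f' t x < K)
    (hM : ∀ x ∈ S, f a x ≤ M) {x : X} (hx : x ∈ S) : f b x ≤ M + K * (b - a) := by
  have hcont : ContinuousOn (fun p : ℝ × X => f p.1 p.2 - K * (p.1 - a)) (Set.Icc a b ×ˢ S) :=
    hf.sub (by fun_prop)
  obtain ⟨⟨t, y⟩, ⟨ht, hy⟩, hmax⟩ := (isCompact_Icc.prod hS).exists_isMaxOn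
    ⟨(a, x), Set.left_mem_Icc.2 hab, hx⟩ hcont
  have hmax' : ∀ s ∈ Set.Icc a b, ∀ z ∈ S, f s z - K * (s - a) ≤ f t y - K * (t - a) :=
    fun s hs z hz => hmax (a := (s, z)) ⟨hs, hz⟩
  obtain rfl : t = a := by
    by_contra hta
    have hat : a < t := lt_of_le_of_ne ht.1 (Ne.symm hta)
    have hnonneg : 0 ≤ f' t y - K * 1 := nonneg_of_isMaxOn_of_hasDerivWithinAt hat
      (fun s hs => hmax' s ⟨hs.1, hs.2.trans ht.2⟩ y hy)
      ((hderiv t ⟨hat, ht.2⟩ y hy).sub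
        (((hasDerivWithinAt_id t _).sub_const a).const_mul K))
    have hneg := hlt t ⟨hat, ht.2⟩ y hy fun z hz =>
      (sub_le_sub_iff_right _).1 (hmax' t ht z hz)
    linarith
  linarith [hmax' b ⟨hab, le_rfl⟩ x hx, hM y hy]

lemma le_add_mul_of_deriv_le_at_max (hS : IsCompact S) (hab : a ≤ b)
    (hf : ContinuousOn (fun p : ℝ × X => f p.1 p.2) (Set.Icc a b ×ˢ S))
    (hderiv : ∀ t ∈ Set.Ioc a b, ∀ x ∈ S,
      HasDerivWithinAt (fun s => f s x) (f' t x) (Set.Icc a t) t)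
    (hle : ∀ t ∈ Set.Ioc a b, ∀ x ∈ S, IsMaxOn (f t) S x → f' t x ≤ K)
    (hM : ∀ x ∈ S, f a x ≤ M) {x : X} (hx : x ∈ S) : f b x ≤ M + K * (b - a) := by
  have hlim : Filter.Tendsto (fun L => M + L * (b - a)) (𝓝[>] K) (𝓝 (M + K * (b - a))) :=
    Continuous.tendsto' (by fun_prop) _ _ rfl |>.mono_left nhdsWithin_le_nhds
  refine ge_of_tendsto hlim ?_
  filter_upwards [self_mem_nhdsWithin] with L hL
  exact le_add_mul_of_deriv_lt_at_max hS hab hf hderiv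
    (fun t ht x hx hmax => (hle t ht x hx hmax).trans_lt hL) hM hx

lemma le_add_mul_of_periodic {f f' : ℝ → ℝ → ℝ} {p : ℝ} (hp : 0 < p) (hab : a ≤ b)
    (hf : ContinuousOn (fun q : ℝ × ℝ => f q.1 q.2) (Set.Icc a b ×ˢ Set.univ))
    (hper : ∀ t ∈ Set.Icc a b, Function.Periodic (f t) p)
    (hderiv : ∀ t ∈ Set.Ioc a b, ∀ x,
      HasDerivWithinAt (fun s => f s x) (f' t x) (Set.Icc a t) t)
    (hle : ∀ t ∈ Set.Ioc a b, ∀ x, deriv (f t) x = 0 → f' t x ≤ K)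
    (hM : ∀ x, f a x ≤ M) (x : ℝ) : f b x ≤ M + K * (b - a) := by
  obtain ⟨y, hy, hxy⟩ := (hper b ⟨hab, le_rfl⟩).exists_mem_Ico₀ hp x
  rw [hxy]
  refine le_add_mul_of_deriv_le_at_max isCompact_Icc hab
    (hf.mono (Set.prod_mono subset_rfl (Set.subset_univ (Set.Icc 0 p))))
    (fun t ht x _ => hderiv t ht x) (fun t ht x _ hmax => hle t ht x ?_) (fun x _ => hM x)
    (Set.Ico_subset_Icc_self hy)
  refine IsLocalMax.deriv_eq_zero (.of_forall fun z => ?_)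
  obtain ⟨w, hw, hzw⟩ := (hper t ⟨ht.1.le, ht.2⟩).exists_mem_Ico₀ hp z
  exact hzw ▸ hmax (Set.Ico_subset_Icc_self hw)

lemma abs_le_add_mul_of_periodic {f f' : ℝ → ℝ → ℝ} {p : ℝ} (hp : 0 < p) (hab : a ≤ b)
    (hf : ContinuousOn (fun q : ℝ × ℝ => f q.1 q.2) (Set.Icc a b ×ˢ Set.univ))
    (hper : ∀ t ∈ Set.Icc a b, Function.Periodic (f t) p)
    (hderiv : ∀ t ∈ Set.Ioc a b, ∀ x,
      HasDerivWithinAt (fun s => f s x) (f' t x) (Set.Icc a t) t)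
    (hle : ∀ t ∈ Set.Ioc a b, ∀ x, deriv (f t) x = 0 → |f' t x| ≤ K)
    (hM : ∀ x, |f a x| ≤ M) (x : ℝ) : |f b x| ≤ M + K * (b - a) := by
  refine abs_le'.2 ⟨le_add_mul_of_periodic hp hab hf hper hderiv
    (fun t ht x hx => (le_abs_self _).trans (hle t ht x hx))
    (fun x => (le_abs_self _).trans (hM x)) x, ?_⟩
  refine le_add_mul_of_periodic (f := fun t x => -f t x) hp hab hf.neg
    (fun t ht x => congrArg Neg.neg (hper t ht x)) (fun t ht x => (hderiv t ht x).fun_neg)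
    (fun t ht x hx => (neg_le_abs _).trans (hle t ht x ?_))
    (fun x => (neg_le_abs _).trans (hM x)) x
  simpa using hx

end MaximumPrinciple

section SmoothFamilies

variable {S K : Set ℝ} {V W : ℝ → ℝ → ℝ} {m : ℤ → ℂ} {s : ℝ}

/-- The function `V` of time and space is smooth on `S × ℝ`, up to the boundary of `S`, and
`2π`-periodic in space. -/
structure SmoothPeriodicOn (S : Set ℝ) (V : ℝ → ℝ → ℝ) : Prop where
  contDiffOn : ContDiffOn ℝ ∞ (fun p : ℝ × ℝ => V p.1 p.2) (Prod.fst ⁻¹' S)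
  periodic : ∀ s ∈ S, Function.Periodic (V s) (2 * π)

/-- The time derivative of `V` within the set of times `S`. -/
noncomputable def timeDeriv (S : Set ℝ) (V : ℝ → ℝ → ℝ) (s θ : ℝ) : ℝ :=
  derivWithin (fun r => V r θ) S s

lemma uniqueDiffOn_preimage_fst (hS : UniqueDiffOn ℝ S) :
    UniqueDiffOn ℝ (Prod.fst ⁻¹' S : Set (ℝ × ℝ)) :=
  Set.prod_univ ▸ hS.prod uniqueDiffOn_univ

namespace SmoothPeriodicOn

lemma smoothPeriodic (hV : SmoothPeriodicOn S V) (hs : s ∈ S) : SmoothPeriodic (V s) where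
  contDiff := contDiffOn_univ.1 <|
    hV.contDiffOn.comp (f := fun x : ℝ => (s, x)) (by fun_prop) fun _ _ => hs
  periodic := hV.periodic s hs

protected lemma sub (hV : SmoothPeriodicOn S V) (hW : SmoothPeriodicOn S W) :
    SmoothPeriodicOn S fun s θ => V s θ - W s θ where
  contDiffOn := hV.contDiffOn.sub hW.contDiffOn
  periodic _ hs := ((hV.smoothPeriodic hs).sub (hW.smoothPeriodic hs)).periodic

protected lemma hasFDerivWithinAt (hV : SmoothPeriodicOn S V) (hs : s ∈ S) (θ : ℝ) :
    HasFDerivWithinAt (fun p : ℝ × ℝ => V p.1 p.2)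
      (fderivWithin ℝ (fun p : ℝ × ℝ => V p.1 p.2) (Prod.fst ⁻¹' S) (s, θ))
      (Prod.fst ⁻¹' S) (s, θ) :=
  (hV.contDiffOn.differentiableOn (by simp) (s, θ) hs).hasFDerivWithinAt

lemma contDiffOn_fderivWithin_apply (hS : UniqueDiffOn ℝ S) (hV : SmoothPeriodicOn S V)
    (w : ℝ × ℝ) :
    ContDiffOn ℝ ∞ (fun p => fderivWithin ℝ (fun p : ℝ × ℝ => V p.1 p.2) (Prod.fst ⁻¹' S) p w)
      (Prod.fst ⁻¹' S) :=
  (hV.contDiffOn.fderivWithin (uniqueDiffOn_preimage_fst hS) (by simp)).clm_apply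
    contDiffOn_const

protected lemma deriv (hS : UniqueDiffOn ℝ S) (hV : SmoothPeriodicOn S V) :
    SmoothPeriodicOn S fun s => deriv (V s) where
  contDiffOn := (hV.contDiffOn_fderivWithin_apply hS (0, 1)).congr fun p hp => by
    have hline := (hV.hasFDerivWithinAt hp p.2).comp_hasDerivWithinAt (s := Set.univ) p.2
      ((hasDerivAt_const p.2 p.1).prodMk (hasDerivAt_id p.2)).hasDerivWithinAt fun _ _ => hp
    exact (hasDerivWithinAt_univ.1 hline).deriv
  periodic _ hs := (hV.smoothPeriodic hs).deriv.periodic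

lemma hasDerivWithinAt_fderivWithin (hV : SmoothPeriodicOn S V) (hs : s ∈ S) (θ : ℝ) :
    HasDerivWithinAt (fun r => V r θ)
      (fderivWithin ℝ (fun p : ℝ × ℝ => V p.1 p.2) (Prod.fst ⁻¹' S) (s, θ) (1, 0)) S s :=
  (hV.hasFDerivWithinAt hs θ).comp_hasDerivWithinAt (f := fun r : ℝ => (r, θ)) s
    ((hasDerivAt_id s).prodMk (hasDerivAt_const s θ)).hasDerivWithinAt fun _ hr => hr

protected lemma hasDerivWithinAt (hV : SmoothPeriodicOn S V) (hs : s ∈ S) (θ : ℝ) :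
    HasDerivWithinAt (fun r => V r θ) (timeDeriv S V s θ) S s :=
  (hV.hasDerivWithinAt_fderivWithin hs θ).differentiableWithinAt.hasDerivWithinAt

protected lemma hasDerivAt (hV : SmoothPeriodicOn S V) (hs : s ∈ interior S) (θ : ℝ) :
    HasDerivAt (fun r => V r θ) (timeDeriv S V s θ) s :=
  (hV.hasDerivWithinAt (interior_subset hs) θ).hasDerivAt (mem_interior_iff_mem_nhds.1 hs)

protected lemma timeDeriv (hS : UniqueDiffOn ℝ S) (hV : SmoothPeriodicOn S V) :
    SmoothPeriodicOn S (timeDeriv S V) where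
  contDiffOn := (hV.contDiffOn_fderivWithin_apply hS (1, 0)).congr fun p hp =>
    (hV.hasDerivWithinAt_fderivWithin hp p.2).derivWithin (hS p.1 hp)
  periodic s hs θ := derivWithin_congr (fun r hr => hV.periodic r hr θ) (hV.periodic s hs θ)

lemma iterate_besselOp (hS : UniqueDiffOn ℝ S) (hV : SmoothPeriodicOn S V) (k : ℕ) :
    SmoothPeriodicOn S fun s => besselOp^[k] (V s) := by
  induction k with
  | zero => exact hV
  | succ k ih =>
    simp only [Function.iterate_succ_apply']
    exact ih.sub ((ih.deriv hS).deriv hS)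

lemma exists_abs_le (hV : SmoothPeriodicOn S V) (hK : IsCompact K) (hKS : K ⊆ S) :
    ∃ B, ∀ s ∈ K, ∀ θ ∈ Set.Icc 0 (2 * π), |V s θ| ≤ B := by
  obtain ⟨B, hB⟩ := (hK.prod (isCompact_Icc (a := 0) (b := 2 * π))).exists_bound_of_continuousOn
    (hV.contDiffOn.continuousOn.mono fun p hp => hKS hp.1)
  exact ⟨B, fun s hs θ hθ => hB (s, θ) ⟨hs, hθ⟩⟩

lemma exists_summable_norm_mul_fourierC_le (hS : UniqueDiffOn ℝ S) (hV : SmoothPeriodicOn S V)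
    (hm : IsRealSymbol m) (hK : IsCompact K) (hKS : K ⊆ S) :
    ∃ b : ℤ → ℝ, Summable b ∧ ∀ s ∈ K, ∀ n, ‖m n * fourierC (V s) n‖ ≤ b n := by
  obtain ⟨C, k, hC⟩ := hm.exists_norm_mul_fourierC_le
  obtain ⟨B, hB⟩ := (hV.iterate_besselOp hS k).exists_abs_le hK hKS
  exact ⟨_, summable_inv_one_add_int_sq.mul_left (C * B),
    fun s hs => hC (hV.smoothPeriodic (hKS hs)) (hB s hs)⟩

lemma continuousOn_fourierC (hV : SmoothPeriodicOn S V) (n : ℤ) :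
    ContinuousOn (fun s => fourierC (V s) n) S := by
  rw [continuousOn_iff_continuous_domRestrict]
  have hcont : Continuous fun p : S × ℝ => V p.1 p.2 :=
    hV.contDiffOn.continuousOn.comp_continuous (f := fun p : S × ℝ => ((p.1 : ℝ), p.2))
      (by fun_prop) fun p => p.1.2
  simp only [Set.domRestrict_def, fourierC]
  refine continuous_const.mul
    (intervalIntegral.continuous_parametric_intervalIntegral_of_continuous' ?_ 0 (2 * π))
  exact (Complex.continuous_ofReal.comp hcont).mul (by fun_prop)

lemma hasDerivAt_fourierC (hS : UniqueDiffOn ℝ S) (hV : SmoothPeriodicOn S V)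
    (hs : s ∈ interior S) (n : ℤ) :
    HasDerivAt (fun r => fourierC (V r) n) (fourierC (timeDeriv S V s) n) s := by
  obtain ⟨ε, hε, hball⟩ := Metric.nhds_basis_closedBall.mem_iff.1 (isOpen_interior.mem_nhds hs)
  have hball' : Metric.closedBall s ε ⊆ S := hball.trans interior_subset
  obtain ⟨B, hB⟩ := (hV.timeDeriv hS).exists_abs_le (isCompact_closedBall s ε) hball'
  have hmeas : ∀ {f : ℝ → ℝ}, SmoothPeriodic f → AEStronglyMeasurable
      (fun θ : ℝ => (f θ : ℂ) * Complex.exp (-I * n * θ)) (volume.restrict (Set.uIoc 0 (2 * π))) :=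
    fun hf => have := hf.continuous; Continuous.aestronglyMeasurable (by fun_prop)
  refine (intervalIntegral.hasDerivAt_integral_of_dominated_loc_of_deriv_le (μ := volume)
    (s := Metric.closedBall s ε) (bound := fun _ => B)
    (F' := fun r θ => (timeDeriv S V r θ : ℂ) * Complex.exp (-I * n * θ))
    (Metric.closedBall_mem_nhds s hε) ?_
    (intervalIntegrable_mul_exp (hV.smoothPeriodic (interior_subset hs)).continuous n 0 (2 * π))
    (hmeas ((hV.timeDeriv hS).smoothPeriodic (interior_subset hs))) ?_ (by simp) ?_).2.const_mul _
  · filter_upwards [Metric.closedBall_mem_nhds s hε] with r hr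
    exact hmeas (hV.smoothPeriodic (hball' hr))
  · refine .of_forall fun θ hθ r hr => ?_
    rw [Set.uIoc_of_le two_pi_pos.le] at hθ
    rw [norm_mul, norm_exp_neg_I_mul, mul_one, Complex.norm_real]
    exact hB r hr θ (Set.Ioc_subset_Icc_self hθ)
  · exact .of_forall fun θ _ r hr => (hV.hasDerivAt (hball hr) θ).ofReal_comp.mul_const _

lemma hasDerivAt_fourierMul (hS : UniqueDiffOn ℝ S) (hV : SmoothPeriodicOn S V)
    (hm : IsRealSymbol m) (hs : s ∈ interior S) (θ : ℝ) :
    HasDerivAt (fun r => fourierMul m (V r) θ)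
      (fourierMul m (timeDeriv S V s) θ) s := by
  obtain ⟨ε, hε, hball⟩ := Metric.nhds_basis_closedBall.mem_iff.1 (isOpen_interior.mem_nhds hs)
  obtain ⟨b, hb, hle⟩ := (hV.timeDeriv hS).exists_summable_norm_mul_fourierC_le hS hm
    (isCompact_closedBall s ε) (hball.trans interior_subset)
  have hsum := hasDerivAt_tsum_of_isPreconnected hb Metric.isOpen_ball
    (convex_ball s ε).isPreconnected
    (fun n r hr => ((hV.hasDerivAt_fourierC hS (hball (Metric.ball_subset_closedBall hr))
      n).const_mul (m n)).mul_const (Complex.exp (I * n * θ)))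
    (fun n r hr => by
      rw [norm_mul, norm_exp_I_mul, mul_one]
      exact hle r (Metric.ball_subset_closedBall hr) n)
    (Metric.mem_ball_self hε) (hm.hasSum (hV.smoothPeriodic (interior_subset hs)) θ).summable
    (Metric.mem_ball_self hε)
  exact Complex.reCLM.hasFDerivAt.comp_hasDerivAt s hsum

lemma fourierC_timeDeriv_deriv (hS : UniqueDiffOn ℝ S) (hV : SmoothPeriodicOn S V)
    (hs : s ∈ interior S) (n : ℤ) :
    fourierC (timeDeriv S (fun r => deriv (V r)) s) n =
      I * n * fourierC (timeDeriv S V s) n := by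
  refine ((hV.deriv hS).hasDerivAt_fourierC hS hs n).unique
    (((hV.hasDerivAt_fourierC hS hs n).const_mul (I * n)).congr_of_eventuallyEq ?_)
  filter_upwards [mem_interior_iff_mem_nhds.1 hs] with r hr
  exact (hV.smoothPeriodic hr).fourierC_deriv n

lemma fourierC_timeDeriv_eq_zero (hS : UniqueDiffOn ℝ S) (hV : SmoothPeriodicOn S V)
    (hs : s ∈ interior S) {n : ℤ} (hn : ∀ r ∈ S, fourierC (V r) n = 0) :
    fourierC (timeDeriv S V s) n = 0 := by
  refine (hV.hasDerivAt_fourierC hS hs n).unique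
    ((hasDerivAt_const s (0 : ℂ)).congr_of_eventuallyEq ?_)
  filter_upwards [mem_interior_iff_mem_nhds.1 hs] with r hr
  exact hn r hr

lemma hasDerivAt_vorticity (hS : UniqueDiffOn ℝ S) (hV : SmoothPeriodicOn S V)
    (hs : s ∈ interior S) (θ : ℝ) :
    HasDerivAt (fun r => vorticity (V r) θ)
      (vorticity (timeDeriv S V s) θ) s := by
  rw [vorticity_eq_fourierMul ((hV.timeDeriv hS).smoothPeriodic (interior_subset hs))]
  refine (hV.hasDerivAt_fourierMul hS isRealSymbol_vorticitySymbol hs θ).congr_of_eventuallyEq ?_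
  filter_upwards [mem_interior_iff_mem_nhds.1 hs] with r hr
  rw [vorticity_eq_fourierMul (hV.smoothPeriodic hr)]

lemma exists_norm_fourierC_le (hV : SmoothPeriodicOn S V) (hK : IsCompact K) (hKS : K ⊆ S) :
    ∃ B, ∀ s ∈ K, ∀ n, ‖fourierC (V s) n‖ ≤ B := by
  obtain ⟨B, hB⟩ := hV.exists_abs_le hK hKS
  exact ⟨B, fun s hs => norm_fourierC_le (hB s hs)⟩

lemma continuousOn_energy (hS : UniqueDiffOn ℝ S) (hV : SmoothPeriodicOn S V)
    (hK : IsCompact K) (hKS : K ⊆ S) : ContinuousOn (fun s => energy (V s)) K := by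
  obtain ⟨b, hb, hle⟩ := hV.exists_summable_norm_mul_fourierC_le hS isRealSymbol_vorticitySymbol
    hK hKS
  obtain ⟨B, hB⟩ := hV.exists_norm_fourierC_le hK hKS
  refine continuousOn_tsum (u := fun n => b n * B) (fun n => continuousOn_const.mul
    (((hV.continuousOn_fourierC n).mono hKS).norm.pow 2)) (hb.mul_right B) fun n s hs => ?_
  have hn := hle s hs n
  rw [norm_mul, Complex.norm_real] at hn
  rw [norm_mul, norm_pow, norm_norm, sq, ← mul_assoc]
  exact mul_le_mul hn (hB s hs n) (norm_nonneg _) ((by positivity : (0 : ℝ) ≤ _).trans hn)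

lemma hasDerivAt_energy (hS : UniqueDiffOn ℝ S) (hV : SmoothPeriodicOn S V)
    (hs : s ∈ interior S) :
    HasDerivAt (fun r => energy (V r))
      (2 * ((2 * π)⁻¹ * ∫ θ in (0 : ℝ)..(2 * π),
        V s θ * vorticity (timeDeriv S V s) θ)) s := by
  obtain ⟨ε, hε, hball⟩ := Metric.nhds_basis_closedBall.mem_iff.1 (isOpen_interior.mem_nhds hs)
  have hball' : Metric.closedBall s ε ⊆ S := hball.trans interior_subset
  obtain ⟨b, hb, hle⟩ := (hV.timeDeriv hS).exists_summable_norm_mul_fourierC_le hS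
    isRealSymbol_vorticitySymbol (isCompact_closedBall s ε) hball'
  obtain ⟨B, hB⟩ := hV.exists_norm_fourierC_le (isCompact_closedBall s ε) hball'
  have hVs := hV.smoothPeriodic (interior_subset hs)
  have hVs' := (hV.timeDeriv hS).smoothPeriodic (interior_subset hs)
  have hinner : ∀ (n : ℤ) (r : ℝ), vorticitySymbol n *
      (2 * inner ℝ (fourierC (V r) n) (fourierC (timeDeriv S V r) n)) =
      2 * inner ℝ (fourierC (V r) n)
        (vorticitySymbol n * fourierC (timeDeriv S V r) n) := fun n r => by
    rw [← Complex.real_smul, real_inner_smul_right]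
    ring
  have hsum := hasDerivAt_tsum_of_isPreconnected (hb.mul_left (2 * B)) Metric.isOpen_ball
    (convex_ball s ε).isPreconnected
    (fun n r hr => (hV.hasDerivAt_fourierC hS (hball (Metric.ball_subset_closedBall hr))
      n).norm_sq.const_mul (vorticitySymbol n))
    (fun n r hr => by
      have hr' := Metric.ball_subset_closedBall hr
      rw [hinner, norm_mul, Real.norm_two, mul_assoc]
      gcongr
      refine (norm_inner_le_norm _ _).trans ?_
      exact mul_le_mul (hB r hr' n) (hle r hr' n) (norm_nonneg _)
        ((norm_nonneg _).trans (hB r hr' n)))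
    (Metric.mem_ball_self hε) hVs.summable_energy (Metric.mem_ball_self hε)
  refine hsum.congr_deriv ?_
  simp only [hinner, tsum_mul_left, ← fourierC_vorticity hVs']
  rw [(hVs.hasSum_inner_fourierC hVs'.vorticity).tsum_eq]

end SmoothPeriodicOn

end SmoothFamilies

section Solutions

variable {S : Set ℝ} {u : ℝ → ℝ → ℝ} {s a b M : ℝ}

/-- `u` is a smooth solution of the Euler–Weil–Petersson equation over the set of times `S`, with
vanishing Fourier modes `0`, `1` and `-1`. The time derivative is taken within `S`, so that it is
one-sided at an initial time. -/
structure IsEWPSolution (S : Set ℝ) (u : ℝ → ℝ → ℝ) : Prop where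
  smoothPeriodicOn : SmoothPeriodicOn S u
  fourierC_eq_zero : ∀ s ∈ S, ∀ n : ℤ, n.natAbs ≤ 1 → fourierC (u s) n = 0
  equation : ∀ s ∈ S, ∀ θ, timeDeriv S (fun r => vorticity (u r)) s θ +
    u s θ * deriv (vorticity (u s)) θ + 2 * deriv (u s) θ * vorticity (u s) θ = 0

/-- The derivative of `u_θ` along the trajectories of the velocity field `u`, that is
`u_θt + u u_θθ`, at time `s`. -/
noncomputable def materialDeriv (S : Set ℝ) (u : ℝ → ℝ → ℝ) (s θ : ℝ) : ℝ :=
  timeDeriv S (fun r => deriv (u r)) s θ + u s θ * deriv (deriv (u s)) θ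

namespace IsEWPSolution

lemma vorticity_timeDeriv (hS : UniqueDiffOn ℝ S) (hu : IsEWPSolution S u)
    (hs : s ∈ interior S) :
    vorticity (timeDeriv S u s) = fun θ => -vorticityAdvection (u s) θ := by
  ext θ
  have heq := hu.equation s (interior_subset hs) θ
  rw [timeDeriv, (hu.smoothPeriodicOn.hasDerivAt_vorticity hS hs θ).hasDerivWithinAt.derivWithin
    (hS s (interior_subset hs))] at heq
  rw [vorticityAdvection]
  linarith

lemma fourierC_timeDeriv (hS : UniqueDiffOn ℝ S) (hu : IsEWPSolution S u)
    (hs : s ∈ interior S) (n : ℤ) :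
    fourierC (timeDeriv S u s) n =
      -(fourierC (vorticityAdvection (u s)) n / vorticitySymbol n) := by
  rcases eq_or_ne (vorticitySymbol n) 0 with hn | hn
  · rw [hn, Complex.ofReal_zero, div_zero, neg_zero]
    exact hu.smoothPeriodicOn.fourierC_timeDeriv_eq_zero hS hs fun r hr =>
      hu.fourierC_eq_zero r hr n (vorticitySymbol_eq_zero_iff.1 hn)
  · have hcoeff := fourierC_vorticity
      ((hu.smoothPeriodicOn.timeDeriv hS).smoothPeriodic (interior_subset hs)) n
    rw [hu.vorticity_timeDeriv hS hs, fourierC_neg] at hcoeff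
    rw [← neg_div, hcoeff, mul_div_cancel_left₀ _ (Complex.ofReal_ne_zero.2 hn)]

lemma hasDerivAt_energy_zero (hS : UniqueDiffOn ℝ S) (hu : IsEWPSolution S u)
    (hs : s ∈ interior S) : HasDerivAt (fun r => energy (u r)) 0 s := by
  refine (hu.smoothPeriodicOn.hasDerivAt_energy hS hs).congr_deriv ?_
  simp only [hu.vorticity_timeDeriv hS hs, mul_neg, intervalIntegral.integral_neg,
    integral_mul_vorticityAdvection (hu.smoothPeriodicOn.smoothPeriodic (interior_subset hs)),
    neg_zero, mul_zero]

lemma energy_eq (hS : UniqueDiffOn ℝ S) (hu : IsEWPSolution S u) (hab : a ≤ b)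
    (habS : Set.Icc a b ⊆ S) : energy (u b) = energy (u a) := by
  obtain rfl | hlt := hab.eq_or_lt
  · rfl
  obtain ⟨c, -, hc⟩ := exists_hasDerivAt_eq_slope (fun r => energy (u r)) (fun _ => 0) hlt
    (hu.smoothPeriodicOn.continuousOn_energy hS isCompact_Icc habS)
    fun r hr => hu.hasDerivAt_energy_zero hS (interior_Icc.ge.trans (interior_mono habS) hr)
  rw [eq_comm, div_eq_zero_iff, or_iff_left (sub_pos.2 hlt).ne'] at hc
  exact sub_eq_zero.1 hc

lemma hasSum_fourierC_materialDeriv (hS : UniqueDiffOn ℝ S) (hu : IsEWPSolution S u)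
    (hs : s ∈ interior S) (n : ℤ) :
    HasSum (fun j : ℤ => (materialSymbol j (n - j : ℤ) : ℂ) *
      (fourierC (u s) j * fourierC (u s) (n - j))) (fourierC (materialDeriv S u s) n) := by
  have hV := hu.smoothPeriodicOn
  have hus := hV.smoothPeriodic (interior_subset hs)
  have hut := ((hV.deriv hS).timeDeriv hS).smoothPeriodic (interior_subset hs)
  have hadd := ((hasSum_fourierC_vorticityAdvection hus n).mul_left
    (-(I * n / vorticitySymbol n))).add (hus.hasSum_fourierC_mul hus.deriv.deriv n)
  have hcoeff : fourierC (materialDeriv S u s) n =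
      -(I * n / vorticitySymbol n) * fourierC (vorticityAdvection (u s)) n +
        fourierC (fun θ => u s θ * deriv (deriv (u s)) θ) n := by
    refine (fourierC_add hut.continuous (hus.mul hus.deriv.deriv).continuous n).trans ?_
    rw [hV.fourierC_timeDeriv_deriv hS hs, hu.fourierC_timeDeriv hS hs]
    ring
  rw [hcoeff]
  refine hadd.congr_fun fun j => ?_
  have hjn : (j : ℝ) + (n - j : ℤ) = n := by push_cast; ring
  rw [hus.deriv.fourierC_deriv, hus.fourierC_deriv, materialSymbol, hjn]
  push_cast
  linear_combination (n / vorticitySymbol n * ((n - j + 2 * j) * vorticitySymbol (n - j)) -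
    (n - j : ℂ) ^ 2) * (fourierC (u s) j * fourierC (u s) (n - j)) * Complex.I_sq

lemma abs_materialDeriv_le (hS : UniqueDiffOn ℝ S) (hu : IsEWPSolution S u)
    (hs : s ∈ interior S) (θ : ℝ) : |materialDeriv S u s θ| ≤ 64 * energy (u s) := by
  have hV := hu.smoothPeriodicOn
  have hus := hV.smoothPeriodic (interior_subset hs)
  have hmat : SmoothPeriodic (materialDeriv S u s) :=
    (((hV.deriv hS).timeDeriv hS).smoothPeriodic (interior_subset hs)).add
      (hus.mul hus.deriv.deriv)
  have hnonneg : 0 ≤ energy (u s) :=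
    tsum_nonneg fun n => mul_nonneg (vorticitySymbol_nonneg n) (sq_nonneg _)
  rw [← Real.norm_eq_abs, ← ENNReal.ofReal_le_ofReal_iff (by positivity), ofReal_norm]
  calc ‖materialDeriv S u s θ‖ₑ ≤ ∑' n, ‖fourierC (materialDeriv S u s) n‖ₑ :=
        hmat.enorm_le_tsum_enorm_fourierC θ
    _ ≤ ENNReal.ofReal (64 * energy (u s)) :=
        tsum_enorm_materialSymbol_le (hu.fourierC_eq_zero s (interior_subset hs))
          hus.summable_energy (hu.hasSum_fourierC_materialDeriv hS hs)

lemma abs_deriv_le (hS : UniqueDiffOn ℝ S) (hu : IsEWPSolution S u) (hab : a ≤ b)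
    (habS : Set.Icc a b ⊆ S) (habS' : Set.Ioc a b ⊆ interior S)
    (hM : ∀ θ, |deriv (u a) θ| ≤ M) (θ : ℝ) :
    |deriv (u b) θ| ≤ M + 64 * energy (u a) * (b - a) := by
  have hV' := hu.smoothPeriodicOn.deriv hS
  refine abs_le_add_mul_of_periodic two_pi_pos hab
    (hV'.contDiffOn.continuousOn.mono fun p hp => habS hp.1)
    (fun t ht => hV'.periodic t (habS ht))
    (fun t ht x => (hV'.hasDerivAt (habS' ht) x).hasDerivWithinAt) (fun t ht x hx => ?_) hM θ
  have hle := hu.abs_materialDeriv_le hS (habS' ht) x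
  rwa [materialDeriv, hx, mul_zero, add_zero,
    hu.energy_eq hS ht.1.le ((Set.Icc_subset_Icc_right ht.2).trans habS)] at hle

end IsEWPSolution

lemma ordConnected_setOf_nonneg_lt (T : EReal) :
    Set.OrdConnected {s : ℝ | 0 ≤ s ∧ (s : EReal) < T} :=
  ⟨fun _ hx _ hy _ hz => ⟨hx.1.trans hz.1, (EReal.coe_le_coe hz.2).trans_lt hy.2⟩⟩

lemma mem_interior_setOf_nonneg_lt {T : EReal} (hs : 0 < s) (hsT : (s : EReal) < T) :
    s ∈ interior {s : ℝ | 0 ≤ s ∧ (s : EReal) < T} := by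
  have hopen : IsOpen {s : ℝ | 0 < s ∧ (s : EReal) < T} :=
    isOpen_Ioi.inter (isOpen_Iio.preimage continuous_coe_real_ereal)
  exact interior_maximal (fun _ hr => And.imp_left le_of_lt hr) hopen ⟨hs, hsT⟩

lemma uniqueDiffOn_setOf_nonneg_lt {T : EReal} (hT : 0 < T) :
    UniqueDiffOn ℝ {s : ℝ | 0 ≤ s ∧ (s : EReal) < T} := by
  obtain ⟨s, hs, hsT⟩ := EReal.lt_iff_exists_real_btwn.1 hT
  exact uniqueDiffOn_convex (ordConnected_setOf_nonneg_lt T).convex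
    ⟨s, mem_interior_setOf_nonneg_lt (EReal.coe_pos.1 hs) hsT⟩

end Solutions

end EulerWeilPetersson

/-- A priori `C¹` bound for the Euler–Weil–Petersson equation
`ω_t + u ω_θ + 2 u_θ ω = 0`, `ω = −H(u_θθθ + u_θ)`, on `[0,T) × S¹`:
`sup_θ |u_θ(t,θ)| ≤ sup_θ |u_θ(0,θ)| + C·E₀·t` with `E₀` the initial `Ḣ^{3/2}` energy. -/
theorem ewp_apriori_C1_bound :
    ∃ C : ℝ, 0 < C ∧ ∀ (T : EReal), 0 < T → ∀ u : ℝ → ℝ → ℝ,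
      -- `u` is smooth on `[0,T) × S¹`
      ContDiffOn ℝ (⊤ : ℕ∞) (fun p : ℝ × ℝ => u p.1 p.2)
        {p : ℝ × ℝ | 0 ≤ p.1 ∧ (p.1 : EReal) < T} →
      -- periodicity in `θ`
      (∀ t : ℝ, 0 ≤ t → (t : EReal) < T → ∀ θ : ℝ, u t (θ + 2 * π) = u t θ) →
      -- the Fourier modes `n = 0, 1, −1` of `u(t,·)` vanish
      (∀ t : ℝ, 0 ≤ t → (t : EReal) < T → ∀ n : ℤ, n.natAbs ≤ 1 → fourierC (u t) n = 0) →
      -- the Euler–Weil–Petersson equation holds pointwise, with `ω = −H(∂³_θ u + ∂_θ u)`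
      (∀ t : ℝ, 0 ≤ t → (t : EReal) < T → ∀ θ : ℝ,
        derivWithin
            (fun s => -hilbertT (fun x => deriv (deriv (deriv (u s))) x + deriv (u s) x) θ)
            {s : ℝ | 0 ≤ s ∧ (s : EReal) < T} t
          + u t θ *
            deriv (fun x => -hilbertT (fun y => deriv (deriv (deriv (u t))) y + deriv (u t) y) x) θ
          + 2 * deriv (u t) θ *
            (-hilbertT (fun x => deriv (deriv (deriv (u t))) x + deriv (u t) x) θ) = 0) →
      -- conclusion: the a priori bound, with the conserved energy `E₀` of the initial data
      (∀ t : ℝ, 0 ≤ t → (t : EReal) < T → ∀ θ : ℝ,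
        |deriv (u t) θ| ≤ (⨆ x : ℝ, |deriv (u 0) x|)
          + C * (∫ x in (0:ℝ)..(2 * π),
              hilbertT (u 0) x * (deriv (deriv (deriv (u 0))) x + deriv (u 0) x)) * t) := by
  refine ⟨64 / (2 * π), by positivity, fun T hT u hsmooth hper hmodes heq t ht htT θ => ?_⟩
  have hu : EulerWeilPetersson.IsEWPSolution {s : ℝ | 0 ≤ s ∧ (s : EReal) < T} u :=
    { smoothPeriodicOn := ⟨hsmooth, fun s hs => hper s hs.1 hs.2⟩
      fourierC_eq_zero := fun s hs => hmodes s hs.1 hs.2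
      equation := fun s hs => heq s hs.1 hs.2 }
  have hsub : Set.Icc 0 t ⊆ {s : ℝ | 0 ≤ s ∧ (s : EReal) < T} :=
    fun s hs => ⟨hs.1, (EReal.coe_le_coe hs.2).trans_lt htT⟩
  have hu₀ := hu.smoothPeriodicOn.smoothPeriodic (hsub ⟨le_rfl, ht⟩)
  obtain ⟨B, hB⟩ := hu₀.deriv.exists_abs_le
  have hsup : ∀ x, |deriv (u 0) x| ≤ ⨆ x : ℝ, |deriv (u 0) x| :=
    le_ciSup (f := fun x => |deriv (u 0) x|) ⟨B, Set.forall_mem_range.2 hB⟩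
  rw [EulerWeilPetersson.integral_hilbertT_mul_eq_energy hu₀, ← mul_assoc,
    div_mul_cancel₀ _ two_pi_pos.ne']
  simpa only [sub_zero] using hu.abs_deriv_le
    (EulerWeilPetersson.uniqueDiffOn_setOf_nonneg_lt hT) ht hsub
    (fun s hs => EulerWeilPetersson.mem_interior_setOf_nonneg_lt hs.1
      (hsub ⟨hs.1.le, hs.2⟩).2) hsup θ
end

section
/- Let f : S¹ → ℝ be a smooth nonconstant function with mean zero (∫_{S¹} f dθ = 0), and let g = Hf be its Hilbert transform. Then there exists a point θ₀ ∈ S¹ such that f′(θ₀) < 0 and g′(θ₀) = 0. -/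
open MeasureTheory Real

/-!
The function `f' + i (Hf)'` is the boundary value of a function `G` that is holomorphic on the unit
disc, continuous up to the boundary, and vanishes at the origin since `f'` has mean zero. As `G` is
not constant, it is open on the disc, so `0` is interior to the compact set `G (closedBall 0 1)`,
and every boundary point of that set is the image of a point of the circle. The negative real ray
from `0` has to leave the set, which it does at a value of `f' + i (Hf)'`.
-/

section Topology

variable {X Y : Type*} [TopologicalSpace X] [TopologicalSpace Y]

theorem frontier_image_closure_subset [T2Space Y] {f : X → Y} {U : Set X}
    (hU : IsCompact (closure U)) (hf : ContinuousOn f (closure U)) (hfU : IsOpen (f '' U)) :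
    frontier (f '' closure U) ⊆ f '' frontier U := by
  rw [(hU.image_of_continuousOn hf).isClosed.frontier_eq]
  rintro _ ⟨⟨x, hx, rfl⟩, hxint⟩
  refine ⟨x, ⟨hx, fun hxU => hxint ?_⟩, rfl⟩
  exact interior_maximal (Set.image_mono subset_closure) hfU ⟨x, interior_subset hxU, rfl⟩

theorem nonempty_inter_frontier_of_isPreconnected {s t : Set X} (hs : IsPreconnected s)
    (hst : (s ∩ interior t).Nonempty) (hsub : ¬ s ⊆ interior t) : (s ∩ frontier t).Nonempty := by
  by_contra hempty
  refine hsub (hs.subset_left_of_subset_union isOpen_interior isClosed_closure.isOpen_compl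
    (disjoint_compl_right.mono_left (interior_subset.trans subset_closure)) (fun x hx => ?_) hst)
  by_contra hx'
  rw [Set.mem_union, Set.mem_compl_iff, not_or, not_not] at hx'
  exact hempty ⟨x, hx, hx'.2, hx'.1⟩

end Topology

theorem exists_pos_add_smul_mem_frontier {E : Type*} [NormedAddCommGroup E] [NormedSpace ℝ E]
    {K : Set E} (hK : Bornology.IsBounded K) {x v : E} (hx : x ∈ interior K) (hv : v ≠ 0) :
    ∃ t : ℝ, 0 < t ∧ x + t • v ∈ frontier K := by
  have hray : IsPreconnected ((fun t : ℝ => x + t • v) '' Set.Ici 0) :=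
    isPreconnected_Ici.image _ (by fun_prop)
  have hleave : ¬ (fun t : ℝ => x + t • v) '' Set.Ici 0 ⊆ interior K := by
    intro hsub
    obtain ⟨C, hC⟩ := (Metric.isBounded_iff_subset_closedBall x).1 hK
    have hmem := hC (interior_subset (hsub ⟨(|C| + 1) / ‖v‖, Set.mem_Ici.2 (by positivity), rfl⟩))
    rw [mem_closedBall_iff_norm, add_sub_cancel_left, norm_smul, norm_div, norm_norm,
      div_mul_cancel₀ _ (norm_ne_zero_iff.2 hv), Real.norm_of_nonneg (by positivity)] at hmem
    linarith [le_abs_self C]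
  obtain ⟨_, ⟨t, ht, rfl⟩, htK⟩ := nonempty_inter_frontier_of_isPreconnected hray
    ⟨x, ⟨0, Set.self_mem_Ici, by simp⟩, hx⟩ hleave
  refine ⟨t, (Set.mem_Ici.1 ht).lt_of_ne ?_, htK⟩
  rintro rfl
  exact htK.2 (by simpa using hx)

theorem exists_mem_frontier_eq_add_smul {G : ℂ → ℂ} {U : Set ℂ} (hUo : IsOpen U)
    (hUb : Bornology.IsBounded U) (hUc : IsPreconnected U) (hG : DiffContOnCl ℂ G U) {z₀ v : ℂ}
    (hz₀ : z₀ ∈ U) (hne : ∃ z ∈ closure U, G z ≠ G z₀) (hv : v ≠ 0) :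
    ∃ z ∈ frontier U, ∃ t : ℝ, 0 < t ∧ G z = G z₀ + t • v := by
  have hcpt : IsCompact (closure U) := hUb.isCompact_closure
  rcases (hG.differentiableOn.analyticOnNhd hUo).is_constant_or_isOpen hUc with ⟨w, hw⟩ | hopen
  · have hconst : Set.EqOn G (fun _ => G z₀) (closure U) :=
      Set.EqOn.of_subset_closure (fun z hz => (hw z hz).trans (hw z₀ hz₀).symm)
        hG.continuousOn continuousOn_const subset_closure subset_rfl
    obtain ⟨z, hz, hzne⟩ := hne
    exact absurd (hconst hz) hzne
  · have hGU : IsOpen (G '' U) := hopen U subset_rfl hUo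
    have hint : G z₀ ∈ interior (G '' closure U) :=
      interior_maximal (Set.image_mono subset_closure) hGU ⟨z₀, hz₀, rfl⟩
    obtain ⟨t, ht, htG⟩ := exists_pos_add_smul_mem_frontier
      (hcpt.image_of_continuousOn hG.continuousOn).isBounded hint hv
    obtain ⟨z, hz, hzt⟩ := frontier_image_closure_subset hcpt hG.continuousOn hGU htG
    exact ⟨z, hz, t, ht, hzt⟩

theorem periodic_deriv {𝕜 F : Type*} [NontriviallyNormedField 𝕜] [NormedAddCommGroup F]
    [NormedSpace 𝕜 F] {f : 𝕜 → F} {c : 𝕜} (hf : Function.Periodic f c) :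
    Function.Periodic (deriv f) c := fun x => by
  rw [← deriv_comp_add_const, hf.funext]

section Fourier

open Complex ComplexConjugate

theorem norm_exp_I_mul_intCast_mul_ofReal (n : ℤ) (θ : ℝ) : ‖exp (I * n * θ)‖ = 1 := by
  simp [Complex.norm_exp]

theorem conj_exp_I_mul_intCast_mul_ofReal (n : ℤ) (θ : ℝ) :
    conj (exp (I * n * θ)) = exp (I * (-n : ℤ) * θ) := by
  simp [← exp_conj]

theorem hasDerivAt_exp_mul_ofReal (a : ℂ) (x : ℝ) :
    HasDerivAt (fun t : ℝ => exp (a * t)) (exp (a * x) * a) x := by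
  simpa using ((hasDerivAt_id (x : ℂ)).const_mul a).cexp.comp_ofReal

theorem fourierC_eq_fourierCoeffOn (f : ℝ → ℝ) (n : ℤ) :
    fourierC f n = fourierCoeffOn two_pi_pos (fun x => (f x : ℂ)) n := by
  rw [fourierCoeffOn_eq_integral, fourierC, sub_zero, real_smul]
  push_cast
  congr 1
  refine intervalIntegral.integral_congr fun x _ => ?_
  simp only [fourier_coe_apply, smul_eq_mul, mul_comm (f x : ℂ)]
  congr 2
  push_cast
  field_simp

theorem fourierC_neg (f : ℝ → ℝ) (n : ℤ) : fourierC f (-n) = conj (fourierC f n) := by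
  rw [fourierC, fourierC, map_mul, ← intervalIntegral.intervalIntegral_conj]
  simp [← exp_conj, conj_ofNat]

theorem fourierC_deriv {f : ℝ → ℝ} (hf : ContDiff ℝ 1 f) (hper : Function.Periodic f (2 * π))
    (n : ℤ) : fourierC (deriv f) n = I * n * fourierC f n := by
  have := hf.continuous_deriv_one
  have hparts := intervalIntegral.integral_mul_deriv_eq_deriv_mul (a := 0) (b := 2 * π)
    (fun x _ => hasDerivAt_exp_mul_ofReal (-I * n) x)
    (fun x _ => (hf.differentiable one_ne_zero x).hasDerivAt.ofReal_comp)
    (Continuous.intervalIntegrable (by fun_prop) _ _)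
    (Continuous.intervalIntegrable (by fun_prop) _ _)
  have hend : exp (-I * n * (2 * π : ℝ)) = 1 :=
    exp_eq_one_iff.2 ⟨-n, by push_cast; ring⟩
  have hint : ∫ θ in (0 : ℝ)..2 * π, exp (-I * n * θ) * (-I * n) * f θ =
      -I * n * ∫ θ in (0 : ℝ)..2 * π, f θ * exp (-I * n * θ) := by
    rw [← intervalIntegral.integral_const_mul]
    exact intervalIntegral.integral_congr fun θ _ => by ring
  rw [hint, hend, hper.eq, ofReal_zero, mul_zero, Complex.exp_zero, one_mul, sub_self,
    zero_sub] at hparts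
  simp only [fourierC, mul_comm ((deriv f _ : ℝ) : ℂ), hparts]
  ring

theorem summable_sq_norm_fourierC {f : ℝ → ℝ} (hf : Continuous f) :
    Summable fun n => ‖fourierC f n‖ ^ 2 := by
  obtain ⟨C, hC⟩ := isCompact_Icc.exists_bound_of_continuousOn
    (hf.continuousOn (s := Set.Icc 0 (2 * π)))
  have hL2 : MemLp (fun x => (f x : ℂ)) 2 (volume.restrict (Set.Ioc 0 (2 * π))) :=
    .of_bound (continuous_ofReal.comp hf).aestronglyMeasurable C <|
      ae_restrict_of_forall_mem measurableSet_Ioc fun x hx => by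
        simpa using hC x (Set.Ioc_subset_Icc_self hx)
  simpa only [fourierC_eq_fourierCoeffOn] using (hasSum_sq_fourierCoeffOn two_pi_pos hL2).summable

theorem summable_fourierC {f : ℝ → ℝ} (hf : ContDiff ℝ 1 f)
    (hper : Function.Periodic f (2 * π)) : Summable (fourierC f) := by
  -- `|cₙ| = |1 / n| |n cₙ|`, and both factors are square summable.
  have hsq : Summable fun n : ℤ => 1 / (n : ℝ) ^ 2 + ‖fourierC (deriv f) n‖ ^ 2 :=
    (Real.summable_one_div_int_pow.2 one_lt_two).add
      (summable_sq_norm_fourierC hf.continuous_deriv_one)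
  refine .of_norm_bounded_eventually hsq ?_
  filter_upwards [(Set.finite_singleton (0 : ℤ)).compl_mem_cofinite] with n hn
  have hn0 : |(n : ℝ)| ≠ 0 := by simpa using hn
  calc ‖fourierC f n‖ = 1 / |(n : ℝ)| * ‖fourierC (deriv f) n‖ := by
        rw [fourierC_deriv hf hper, norm_mul, norm_mul, norm_I, one_mul, norm_intCast]
        field_simp
    _ ≤ (1 / |(n : ℝ)|) ^ 2 + ‖fourierC (deriv f) n‖ ^ 2 := by
        have : 0 ≤ 1 / |(n : ℝ)| * ‖fourierC (deriv f) n‖ := by positivity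
        linarith [two_mul_le_add_sq (1 / |(n : ℝ)|) ‖fourierC (deriv f) n‖]
    _ = 1 / (n : ℝ) ^ 2 + ‖fourierC (deriv f) n‖ ^ 2 := by rw [div_pow, one_pow, sq_abs]

theorem hasSum_fourierC_mul_exp {f : ℝ → ℝ} (hf : Continuous f)
    (hper : Function.Periodic f (2 * π)) (hsum : Summable (fourierC f)) (θ : ℝ) :
    HasSum (fun n : ℤ => fourierC f n * exp (I * n * θ)) (f θ) := by
  have : Fact (0 < 2 * π) := ⟨two_pi_pos⟩
  let F : C(AddCircle (2 * π), ℂ) :=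
    ⟨fun x => (hper.lift x : ℂ), continuous_ofReal.comp (continuous_coinduced_dom.2 hf)⟩
  have hcoeff : fourierCoeff F = fourierC f := by
    ext n
    rw [fourierC_eq_fourierCoeffOn, fourierCoeffOn_eq_integral,
      fourierCoeff_eq_intervalIntegral F n 0, zero_add, sub_zero]
    rfl
  have hF := has_pointwise_sum_fourier_series_of_summable (hcoeff ▸ hsum) (θ : AddCircle (2 * π))
  refine hF.congr_fun fun n => ?_
  rw [hcoeff, fourier_coe_apply, smul_eq_mul]
  congr 2
  push_cast
  field_simp

theorem norm_intCast_sign_le_one (n : ℤ) : ‖(n.sign : ℂ)‖ ≤ 1 := by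
  rcases lt_trichotomy n 0 with hn | rfl | hn
  · simp [Int.sign_eq_neg_one_of_neg hn]
  · simp
  · simp [Int.sign_eq_one_of_pos hn]

theorem norm_hilbertT_term_le (c : ℂ) (n : ℤ) (θ : ℝ) :
    ‖-I * n.sign * c * exp (I * n * θ)‖ ≤ ‖c‖ := by
  rw [norm_mul, norm_mul, norm_mul, norm_exp_I_mul_intCast_mul_ofReal, norm_neg, norm_I, one_mul,
    mul_one]
  exact mul_le_of_le_one_left (norm_nonneg c) (norm_intCast_sign_le_one n)

theorem ofReal_hilbertT (f : ℝ → ℝ) (θ : ℝ) :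
    (hilbertT f θ : ℂ) = ∑' n : ℤ, -I * n.sign * fourierC f n * exp (I * n * θ) := by
  rw [hilbertT, ← conj_eq_iff_re, conj_tsum, ← (Equiv.neg ℤ).tsum_eq]
  refine tsum_congr fun n => ?_
  rw [Equiv.neg_apply, fourierC_neg, map_mul, conj_exp_I_mul_intCast_mul_ofReal, neg_neg]
  simp

theorem hasSum_hilbertT {f : ℝ → ℝ} (hsum : Summable (fourierC f)) (θ : ℝ) :
    HasSum (fun n : ℤ => -I * n.sign * fourierC f n * exp (I * n * θ)) (hilbertT f θ) := by
  rw [ofReal_hilbertT]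
  exact (Summable.of_norm_bounded hsum.norm fun n => norm_hilbertT_term_le _ n θ).hasSum

theorem hasDerivAt_hilbertT {f : ℝ → ℝ} (hf : ContDiff ℝ 1 f)
    (hper : Function.Periodic f (2 * π)) (hsum : Summable (fourierC (deriv f))) (θ : ℝ) :
    HasDerivAt (hilbertT f) (hilbertT (deriv f) θ) θ := by
  have hterm (n : ℤ) (x : ℝ) :
      HasDerivAt (fun x : ℝ => -I * n.sign * fourierC f n * exp (I * n * x))
        (-I * n.sign * fourierC (deriv f) n * exp (I * n * x)) x := by
    refine ((hasDerivAt_exp_mul_ofReal (I * n) x).const_mul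
      (-I * n.sign * fourierC f n)).congr_deriv ?_
    rw [fourierC_deriv hf hper]
    ring
  have hseries := hasDerivAt_tsum hsum.norm hterm (fun n x => norm_hilbertT_term_le _ n x)
    (hasSum_hilbertT (summable_fourierC hf hper) 0).summable θ
  exact reCLM.hasFDerivAt.comp_hasDerivAt θ hseries

/-- The holomorphic function `c₀ + 2 ∑_{n ≥ 1} cₙ zⁿ` on the unit disc whose boundary values are
`f + i Hf`, where `cₙ` are the Fourier coefficients of `f`. The factor `1 + sgn n` encodes the
coefficients, and as a function of `n : ℤ` it vanishes for `n < 0`. -/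
noncomputable def analyticCompletion (f : ℝ → ℝ) (z : ℂ) : ℂ :=
  ∑' n : ℕ, (1 + (n : ℤ).sign) * fourierC f n * z ^ n

theorem analyticCompletion_zero (f : ℝ → ℝ) : analyticCompletion f 0 = fourierC f 0 := by
  rw [analyticCompletion, tsum_eq_single 0 fun n hn => by rw [zero_pow hn, mul_zero]]
  simp

theorem diffContOnCl_analyticCompletion {f : ℝ → ℝ} (hsum : Summable (fourierC f)) :
    DiffContOnCl ℂ (analyticCompletion f) (Metric.ball 0 1) := by
  have hbound : Summable fun n : ℕ => 2 * ‖fourierC f n‖ :=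
    (hsum.norm.comp_injective Nat.cast_injective).mul_left 2
  have hterm (n : ℕ) (z : ℂ) (hz : z ∈ Metric.closedBall 0 1) :
      ‖(1 + (n : ℤ).sign) * fourierC f n * z ^ n‖ ≤ 2 * ‖fourierC f n‖ := by
    have hsign : ‖(1 + (n : ℤ).sign : ℂ)‖ ≤ 2 := by
      linarith [norm_add_le (1 : ℂ) (n : ℤ).sign, norm_one (α := ℂ),
        norm_intCast_sign_le_one (n : ℤ)]
    rw [norm_mul, norm_mul, norm_pow]
    exact (mul_le_of_le_one_right (by positivity) (pow_le_one₀ (norm_nonneg z)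
      (mem_closedBall_zero_iff.1 hz))).trans (by gcongr)
  refine ⟨differentiableOn_tsum_of_summable_norm hbound (fun n => by fun_prop) Metric.isOpen_ball
    fun n z hz => hterm n z (Metric.ball_subset_closedBall hz), ?_⟩
  rw [closure_ball 0 one_ne_zero]
  exact continuousOn_tsum (fun n => by fun_prop) hbound hterm

theorem analyticCompletion_exp {f : ℝ → ℝ} (hf : Continuous f)
    (hper : Function.Periodic f (2 * π)) (hsum : Summable (fourierC f)) (θ : ℝ) :
    analyticCompletion f (exp (θ * I)) = f θ + hilbertT f θ * I := by
  have hboundary : HasSum (fun n : ℤ => (1 + n.sign) * fourierC f n * exp (I * n * θ))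
      (f θ + hilbertT f θ * I) := by
    convert (hasSum_fourierC_mul_exp hf hper hsum θ).add ((hasSum_hilbertT hsum θ).mul_right I)
      using 2 with n
    linear_combination (n.sign * fourierC f n * exp (I * n * θ)) * I_sq
  have hneg (n : ℤ) (hn : n ∉ Set.range ((↑) : ℕ → ℤ)) :
      (1 + n.sign) * fourierC f n * exp (I * n * θ) = 0 := by
    have hn' : n < 0 := by
      by_contra! h
      exact hn ⟨n.toNat, Int.toNat_of_nonneg h⟩
    simp [Int.sign_eq_neg_one_of_neg hn']
  rw [← (Nat.cast_injective.hasSum_iff hneg).2 hboundary |>.tsum_eq, analyticCompletion]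
  refine tsum_congr fun n => ?_
  rw [Function.comp_apply, ← Complex.exp_nat_mul]
  congr 2
  push_cast
  ring

theorem exists_neg_and_hilbertT_eq_zero {f : ℝ → ℝ} (hf : Continuous f)
    (hper : Function.Periodic f (2 * π)) (hsum : Summable (fourierC f)) (hmean : fourierC f 0 = 0)
    (hne : ∃ x, f x ≠ 0) : ∃ θ, f θ < 0 ∧ hilbertT f θ = 0 := by
  have hboundary := analyticCompletion_exp hf hper hsum
  have hzero : analyticCompletion f 0 = 0 := (analyticCompletion_zero f).trans hmean
  have hnonconst : ∃ z ∈ closure (Metric.ball 0 1),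
      analyticCompletion f z ≠ analyticCompletion f 0 := by
    obtain ⟨x, hx⟩ := hne
    refine ⟨exp (x * I), by simp [closure_ball, norm_exp_ofReal_mul_I], fun h => hx ?_⟩
    simpa [hboundary, hzero] using congrArg re h
  obtain ⟨z, hz, t, ht, hzt⟩ := exists_mem_frontier_eq_add_smul Metric.isOpen_ball
    Metric.isBounded_ball (convex_ball 0 1).isPreconnected
    (diffContOnCl_analyticCompletion hsum) (Metric.mem_ball_self one_pos) hnonconst
    (neg_ne_zero.2 one_ne_zero)
  rw [frontier_ball 0 one_ne_zero, mem_sphere_zero_iff_norm, norm_eq_one_iff] at hz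
  obtain ⟨θ, rfl⟩ := hz
  rw [hboundary, hzero, zero_add] at hzt
  have hre : f θ = -t := by simpa using congrArg re hzt
  exact ⟨θ, by linarith, by simpa using congrArg im hzt⟩

end Fourier

theorem exists_point_deriv_neg_hilbert_deriv_zero_general {f : ℝ → ℝ} (hf : ContDiff ℝ 2 f)
    (hper : Function.Periodic f (2 * π)) (hnonconst : ∃ a b : ℝ, f a ≠ f b) :
    ∃ θ₀ : ℝ, deriv f θ₀ < 0 ∧ deriv (hilbertT f) θ₀ = 0 := by
  have hf₁ : ContDiff ℝ 1 f := hf.of_le one_le_two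
  have hf' : ContDiff ℝ 1 (deriv f) := (contDiff_succ_iff_deriv.1 hf).2.2
  have hper' := periodic_deriv hper
  have hsum := summable_fourierC hf' hper'
  have hmean : fourierC (deriv f) 0 = 0 := by simp [fourierC_deriv hf₁ hper]
  have hne : ∃ x, deriv f x ≠ 0 := by
    by_contra! h
    obtain ⟨a, b, hab⟩ := hnonconst
    exact hab (is_const_of_deriv_eq_zero (hf₁.differentiable one_ne_zero) h a b)
  obtain ⟨θ, hneg, hzero⟩ :=
    exists_neg_and_hilbertT_eq_zero hf'.continuous hper' hsum hmean hne
  exact ⟨θ, hneg, (hasDerivAt_hilbertT hf₁ hper hsum θ).deriv.trans hzero⟩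

/-- For a smooth nonconstant mean-zero `f : S¹ → ℝ` with `g = Hf`,
there is a point `θ₀` with `f′(θ₀) < 0` and `g′(θ₀) = 0`. -/
theorem exists_point_deriv_neg_hilbert_deriv_zero (f : ℝ → ℝ)
    (hf : ContDiff ℝ (⊤ : ℕ∞) f)
    (hper : ∀ θ : ℝ, f (θ + 2 * π) = f θ)
    (hmean : (∫ θ in (0:ℝ)..(2 * π), f θ) = 0)
    (hnonconst : ∃ a b : ℝ, f a ≠ f b) :
    ∃ θ₀ : ℝ, deriv f θ₀ < 0 ∧ deriv (fun x => hilbertT f x) θ₀ = 0 :=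
  exists_point_deriv_neg_hilbert_deriv_zero_general
    (hf.of_le (WithTop.coe_le_coe.2 le_top)) hper hnonconst
end
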